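/- arXiv:1709.06893 — 4 statements merged into one kernel-verified Lean document; each statement's English description precedes it below -/
import Mathlib

section
/- Soundness of Π(CS): for every constant specification CS and every formula A ∈ Form^Ag, if A is provable in Π(CS) (⊢_CS A), then A is valid over the class of CS-normal jstit models, i.e., M,m,h ⊨ A for every CS-normal jstit model M and every moment-history pair (m,h) of M. -/
open Classical

/-- Proof polynomials. -/
inductive Pol : Type
  | pvar : ℕ → Pol
  | pconst : ℕ → Pol
  | sum : Pol → Pol → Pol
  | app : Pol → Pol → Pol
  | bang : Pol → Pol

/-- Formulas of explicit jstit logic over an agent community `Ag`. -/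
inductive Form (Ag : Type) : Type
  | var : ℕ → Form Ag
  | and : Form Ag → Form Ag → Form Ag
  | neg : Form Ag → Form Ag
  | stit : Ag → Form Ag → Form Ag
  | box : Form Ag → Form Ag
  | pf : Pol → Form Ag → Form Ag
  | know : Form Ag → Form Ag
  | prove : Ag → Pol → Form Ag → Form Ag
  | proven : Pol → Form Ag → Form Ag

namespace Form

variable {Ag : Type}

def imp (A B : Form Ag) : Form Ag := Form.neg (Form.and A (Form.neg B))

def or (A B : Form Ag) : Form Ag := Form.neg (Form.and (Form.neg A) (Form.neg B))

def falsum : Form Ag := Form.and (Form.var 0) (Form.neg (Form.var 0))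

def dia (A : Form Ag) : Form Ag := Form.neg (Form.box (Form.neg A))

def diaStit (j : Ag) (A : Form Ag) : Form Ag := Form.neg (Form.stit j (Form.neg A))

def conjList : List (Form Ag) → Form Ag
  | [] => Form.neg falsum
  | [A] => A
  | A :: B :: rest => Form.and A (conjList (B :: rest))

def disjList : List (Form Ag) → Form Ag
  | [] => falsum
  | [A] => A
  | A :: B :: rest => Form.or A (disjList (B :: rest))

end Form

/-- Conjunction of `F j` over all agents `j ∈ Ag`. -/
noncomputable def bigConjAg {Ag : Type} [Fintype Ag] (F : Ag → Form Ag) : Form Ag :=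
  Form.conjList (((Finset.univ : Finset Ag).toList).map F)

/-- The axiom schemes (A0)-(A8), (B9)-(B13) of the system Π. -/
inductive Ax {Ag : Type} [Fintype Ag] : Form Ag → Prop
  | pl1 (A B : Form Ag) : Ax (A.imp (B.imp A))
  | pl2 (A B C : Form Ag) : Ax ((A.imp (B.imp C)).imp ((A.imp B).imp (A.imp C)))
  | pl3 (A B : Form Ag) : Ax (((A.neg).imp (B.neg)).imp (B.imp A))
  | boxK (A B : Form Ag) : Ax ((Form.box (A.imp B)).imp ((Form.box A).imp (Form.box B)))
  | boxT (A : Form Ag) : Ax ((Form.box A).imp A)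
  | box4 (A : Form Ag) : Ax ((Form.box A).imp (Form.box (Form.box A)))
  | box5 (A : Form Ag) : Ax ((Form.dia A).imp (Form.box (Form.dia A)))
  | stitK (j : Ag) (A B : Form Ag) :
      Ax ((Form.stit j (A.imp B)).imp ((Form.stit j A).imp (Form.stit j B)))
  | stitT (j : Ag) (A : Form Ag) : Ax ((Form.stit j A).imp A)
  | stit4 (j : Ag) (A : Form Ag) : Ax ((Form.stit j A).imp (Form.stit j (Form.stit j A)))
  | stit5 (j : Ag) (A : Form Ag) : Ax ((Form.diaStit j A).imp (Form.stit j (Form.diaStit j A)))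
  | a2 (j : Ag) (A : Form Ag) : Ax ((Form.box A).imp (Form.stit j A))
  | a3 (l : List (Ag × Form Ag)) (hne : l ≠ []) (hl : l.Pairwise (fun a b => a.1 ≠ b.1)) :
      Ax ((Form.conjList (l.map fun p => Form.dia (Form.stit p.1 p.2))).imp
          (Form.dia (Form.conjList (l.map fun p => Form.stit p.1 p.2))))
  | a4 (s t : Pol) (A B : Form Ag) :
      Ax ((Form.pf s (A.imp B)).imp ((Form.pf t A).imp (Form.pf (Pol.app s t) B)))
  | a5 (t : Pol) (A : Form Ag) :
      Ax ((Form.pf t A).imp (Form.and (Form.pf (Pol.bang t) (Form.pf t A)) (Form.know A)))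
  | a6 (s t : Pol) (A : Form Ag) :
      Ax (((Form.pf s A).or (Form.pf t A)).imp (Form.pf (Pol.sum s t) A))
  | kK (A B : Form Ag) : Ax ((Form.know (A.imp B)).imp ((Form.know A).imp (Form.know B)))
  | kT (A : Form Ag) : Ax ((Form.know A).imp A)
  | k4 (A : Form Ag) : Ax ((Form.know A).imp (Form.know (Form.know A)))
  | a8 (A : Form Ag) : Ax ((Form.know A).imp (Form.box (Form.know (Form.box A))))
  | b9 (j : Ag) (t : Pol) (A : Form Ag) :
      Ax ((Form.prove j t A).imp
        (Form.and ((Form.proven t A).neg)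
          (Form.and (Form.stit j (Form.prove j t A))
            (Form.and ((Form.box (Form.prove j t A)).neg) (Form.pf t A)))))
  | b10 (j : Ag) (t : Pol) (A B : Form Ag) :
      Ax ((Form.and (Form.prove j t A) (Form.pf t B)).imp (Form.prove j t B))
  | b11 (t : Pol) (A : Form Ag) :
      Ax ((Form.proven t A).imp (Form.and (Form.know (Form.proven t A)) (Form.pf t A)))
  | b12 (t : Pol) (A B : Form Ag) :
      Ax ((Form.and (Form.proven t A) (Form.pf t B)).imp (Form.proven t B))
  | b13 (j : Ag) (t : Pol) (A : Form Ag) :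
      Ax (((Form.prove j t A).neg).imp
        (Form.diaStit j (bigConjAg fun i => (Form.prove i t A).neg)))

/-- Provability in Π(CS): the axioms plus modus ponens, K-necessitation,
the rule (S4), and the rule inferring members of CS. -/
inductive Prov {Ag : Type} [Fintype Ag] (CS : Set (Form Ag)) : Form Ag → Prop
  | ax {A : Form Ag} : Ax A → Prov CS A
  | mp {A B : Form Ag} : Prov CS (A.imp B) → Prov CS A → Prov CS B
  | knec {A : Form Ag} : Prov CS A → Prov CS (Form.know A)
  | s4 {A : Form Ag} {l : List (Pol × Form Ag)} (hne : l ≠ []) :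
      Prov CS ((Form.know A).imp (Form.disjList (l.map fun p => (Form.proven p.1 p.2).neg))) →
      Prov CS ((Form.know A).imp
        (Form.disjList (l.map fun p => bigConjAg fun j => (Form.prove j p.1 p.2).neg)))
  | rcs {A : Form Ag} : A ∈ CS → Prov CS A

/-- Formulas of the form c_n : … : c_1 : A with A an axiom instance. -/
inductive CSForm {Ag : Type} [Fintype Ag] : Form Ag → Prop
  | base (c : ℕ) {A : Form Ag} : Ax A → CSForm (Form.pf (Pol.pconst c) A)
  | step (c : ℕ) {B : Form Ag} : CSForm B → CSForm (Form.pf (Pol.pconst c) B)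

/-- CS is a constant specification. -/
def IsConstSpec {Ag : Type} [Fintype Ag] (CS : Set (Form Ag)) : Prop :=
  (∀ A ∈ CS, CSForm A) ∧
  (∀ (c c' : ℕ) (B : Form Ag),
    Form.pf (Pol.pconst c) (Form.pf (Pol.pconst c') B) ∈ CS →
      Form.pf (Pol.pconst c') B ∈ CS)

/-- Γ is CS-consistent. -/
def ConsistentSet {Ag : Type} [Fintype Ag] (CS : Set (Form Ag)) (Γ : Set (Form Ag)) : Prop :=
  ¬ ∃ l : List (Form Ag), l ≠ [] ∧ (∀ A ∈ l, A ∈ Γ) ∧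
      Prov CS ((Form.conjList l).imp Form.falsum)

/-- Γ is CS-maxiconsistent. -/
def MaxiCons {Ag : Type} [Fintype Ag] (CS Γ : Set (Form Ag)) : Prop :=
  ConsistentSet CS Γ ∧ ∀ Δ, Γ ⊆ Δ → ConsistentSet CS Δ → Δ = Γ

/-- The raw ingredients of a jstit model (constraints imposed separately). -/
structure PreModel (Ag : Type) : Type 1 where
  W : Type
  le : W → W → Prop
  Choice : W → Ag → Set W → Set (Set W)
  Act : W → Set W → Set Pol
  R : W → W → Prop
  Re : W → W → Prop
  E : W → Pol → Set (Form Ag)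
  V : ℕ → W → Set W → Prop

namespace PreModel

variable {Ag : Type}

/-- h is a history (maximal chain) passing through m. -/
def HistAt (M : PreModel Ag) (m : M.W) (h : Set M.W) : Prop :=
  IsMaxChain M.le h ∧ m ∈ h

/-- The strict companion ⊲ of ⊴. -/
def lt (M : PreModel Ag) (m m' : M.W) : Prop := M.le m m' ∧ m ≠ m'

/-- h and g are undivided at m. -/
def Undiv (M : PreModel Ag) (m : M.W) (h g : Set M.W) : Prop :=
  ∃ m', M.lt m m' ∧ m' ∈ h ∧ m' ∈ g

/-- Act_m = ⋂_{h ∈ H_m} Act(m,h). -/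
def ActM (M : PreModel Ag) (m : M.W) : Set Pol :=
  {t | ∀ h, M.HistAt m h → t ∈ M.Act m h}

/-- Act_{(m,h,j)} = ⋂_{g ∈ Choice^m_j(h)} Act(m,g). -/
def ActC (M : PreModel Ag) (m : M.W) (h : Set M.W) (j : Ag) : Set Pol :=
  {t | ∀ g ∈ M.Choice m j h, t ∈ M.Act m g}

/-- The satisfaction relation M, m, h ⊨ A. -/
def Sat (M : PreModel Ag) : Form Ag → M.W → Set M.W → Prop
  | Form.var p, m, h => M.V p m h
  | Form.and A B, m, h => M.Sat A m h ∧ M.Sat B m h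
  | Form.neg A, m, h => ¬ M.Sat A m h
  | Form.stit j A, m, h => ∀ h' ∈ M.Choice m j h, M.Sat A m h'
  | Form.box A, m, _h => ∀ h', M.HistAt m h' → M.Sat A m h'
  | Form.know A, m, _h => ∀ m' h', M.R m m' → M.HistAt m' h' → M.Sat A m' h'
  | Form.pf t A, m, _h =>
      A ∈ M.E m t ∧ ∀ m' h', M.Re m m' → M.HistAt m' h' → M.Sat A m' h'
  | Form.prove j t A, m, h =>
      t ∈ M.ActC m h j ∧
      (A ∈ M.E m t ∧ ∀ m' h', M.Re m m' → M.HistAt m' h' → M.Sat A m' h') ∧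
      t ∉ M.ActM m
  | Form.proven t A, m, _h =>
      t ∈ M.ActM m ∧
      (A ∈ M.E m t ∧ ∀ m' h', M.Re m m' → M.HistAt m' h' → M.Sat A m' h')

/-- The eleven (plus basic order/partition) constraints making a `PreModel` a jstit model. -/
structure IsJStit (M : PreModel Ag) : Prop where
  nonempty : Nonempty M.W
  le_refl : ∀ m, M.le m m
  le_trans : ∀ m1 m2 m3, M.le m1 m2 → M.le m2 m3 → M.le m1 m3
  le_antisymm : ∀ m1 m2, M.le m1 m2 → M.le m2 m1 → m1 = m2
  histConn : ∀ m m1, ∃ m2, M.le m2 m ∧ M.le m2 m1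
  noBackBranch : ∀ m m1 m2, M.le m1 m → M.le m2 m → (M.le m1 m2 ∨ M.le m2 m1)
  choice_self : ∀ m j h, M.HistAt m h → h ∈ M.Choice m j h
  choice_hist : ∀ m j h, M.HistAt m h → ∀ g ∈ M.Choice m j h, M.HistAt m g
  choice_cells : ∀ m j h, M.HistAt m h → ∀ g ∈ M.Choice m j h, M.Choice m j g = M.Choice m j h
  noChoiceUndiv : ∀ m j h g, M.HistAt m h → M.HistAt m g → M.Undiv m h g →
      M.Choice m j h = M.Choice m j g
  indep : ∀ m (f : Ag → Set M.W), (∀ j, M.HistAt m (f j)) →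
      ∃ h, ∀ j, h ∈ M.Choice m j (f j)
  r_refl : ∀ m, M.R m m
  r_trans : ∀ m1 m2 m3, M.R m1 m2 → M.R m2 m3 → M.R m1 m3
  re_refl : ∀ m, M.Re m m
  re_trans : ∀ m1 m2 m3, M.Re m1 m2 → M.Re m2 m3 → M.Re m1 m3
  r_sub_re : ∀ m m', M.R m m' → M.Re m m'
  monoEv : ∀ (t : Pol) m m', M.Re m m' → M.E m t ⊆ M.E m' t
  evApp : ∀ m (s t : Pol) (A B : Form Ag),
      A.imp B ∈ M.E m s → A ∈ M.E m t → B ∈ M.E m (Pol.app s t)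
  evSum : ∀ m (s t : Pol), M.E m s ∪ M.E m t ⊆ M.E m (Pol.sum s t)
  evBang : ∀ m (t : Pol) (A : Form Ag), A ∈ M.E m t → Form.pf t A ∈ M.E m (Pol.bang t)
  expand : ∀ m' m h, M.lt m' m → M.HistAt m h → M.Act m' h ⊆ M.Act m h
  noNew : ∀ m t, t ∈ M.ActM m → ∃ m' h, M.lt m' m ∧ M.HistAt m h ∧ t ∈ M.Act m' h
  divide : ∀ m h g, M.HistAt m h → M.HistAt m g → M.Undiv m h g → M.Act m h = M.Act m g
  futureMatters : ∀ m m', M.le m m' → M.R m m'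
  transparency : ∀ m m', M.Re m m' → M.ActM m ⊆ M.ActM m'

/-- M is CS-normal. -/
def CSNormal [Fintype Ag] (M : PreModel Ag) (CS : Set (Form Ag)) : Prop :=
  ∀ (c : ℕ) (m : M.W) (A : Form Ag), Form.pf (Pol.pconst c) A ∈ CS → A ∈ M.E m (Pol.pconst c)

/-- M is unirelational: R_e ⊆ R (hence R_e = R). -/
def Unirelational (M : PreModel Ag) : Prop := ∀ m m', M.Re m m' → M.R m m'

/-- M is based on discrete time: every history is order-isomorphic to an
initial segment of ω. -/
def DiscreteTime (M : PreModel Ag) : Prop :=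
  ∀ h : Set M.W, IsMaxChain M.le h →
    ∃ f : M.W → ℕ,
      (∀ x ∈ h, ∀ y ∈ h, (M.le x y ↔ f x ≤ f y)) ∧
      (∀ x ∈ h, ∀ n : ℕ, n ≤ f x → ∃ y ∈ h, f y = n)

end PreModel

/-- The step relation between consecutive components of an element. -/
def ElemStep {Ag : Type} (Γ Δ : Set (Form Ag)) : Prop :=
  (∀ A : Form Ag, Form.know A ∈ Γ → Form.know A ∈ Δ) ∧
  (∀ (j : Ag) (t : Pol) (A : Form Ag), Form.prove j t A ∈ Γ → Form.proven t A ∈ Δ)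

/-- An element: a nonempty finite sequence of CS-maxiconsistent sets
satisfying the two transfer conditions. -/
def IsElement {Ag : Type} [Fintype Ag] (CS : Set (Form Ag)) (l : List (Set (Form Ag))) : Prop :=
  l ≠ [] ∧ (∀ Γ ∈ l, MaxiCons CS Γ) ∧ l.Chain' ElemStep

/-- end(ξ): the last component of an element. -/
def endSet {Ag : Type} (l : List (Set (Form Ag))) : Set (Form Ag) := l.getLastD ∅

/-- The relation ≡ between elements (of equal length). -/
def ElemEquiv {Ag : Type} (l₁ l₂ : List (Set (Form Ag))) : Prop :=
  l₁ ≠ [] ∧ l₂ ≠ [] ∧ l₁.dropLast = l₂.dropLast ∧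
  ∀ A : Form Ag, Form.box A ∈ endSet l₁ → A ∈ endSet l₂

/-- The ≡-equivalence class of an element ξ. -/
def eqcl {Ag : Type} [Fintype Ag] (CS : Set (Form Ag)) (ξ : List (Set (Form Ag))) :
    Set (List (Set (Form Ag))) :=
  {τ | IsElement CS τ ∧ ElemEquiv ξ τ}

/-- C is a ≡-equivalence class of elements. -/
def IsEqClass {Ag : Type} [Fintype Ag] (CS : Set (Form Ag))
    (C : Set (List (Set (Form Ag)))) : Prop :=
  ∃ ξ, IsElement CS ξ ∧ C = eqcl CS ξ

/-- The canonical Tree: † (= `none`) together with the standard moments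
([ξ]_≡, n) (= `some (⟨[ξ]_≡, _⟩, n)`). -/
abbrev CanW (Ag : Type) [Fintype Ag] (CS : Set (Form Ag)) : Type :=
  Option ({C : Set (List (Set (Form Ag))) // IsEqClass CS C} × ℕ)

/-- ξ is a proper initial segment of τ. -/
def ProperPrefix {α : Type} (ξ τ : List α) : Prop := ξ <+: τ ∧ ξ ≠ τ

/-- The canonical strict order ⊲. -/
def canLt {Ag : Type} [Fintype Ag] (CS : Set (Form Ag)) : CanW Ag CS → CanW Ag CS → Prop
  | none, none => False
  | none, some _ => True
  | some _, none => False
  | some p, some q =>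
      (∃ ξ ∈ p.1.val, ∀ τ ∈ q.1.val, ProperPrefix ξ τ) ∨ (p.1.val = q.1.val ∧ q.2 < p.2)

/-- The canonical order ⊴ (reflexive closure of ⊲). -/
def canLe {Ag : Type} [Fintype Ag] (CS : Set (Form Ag)) (m m' : CanW Ag CS) : Prop :=
  canLt CS m m' ∨ m = m'

/-- The height of a canonical moment. -/
def canHeight {Ag : Type} [Fintype Ag] {CS : Set (Form Ag)} : CanW Ag CS → ℕ
  | none => 0
  | some p => p.2

/-- A basic sequence of elements (indexed so that `S n` has length n+1). -/
def BasicSeq {Ag : Type} [Fintype Ag] (CS : Set (Form Ag))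
    (S : ℕ → List (Set (Form Ag))) : Prop :=
  ∀ n, IsElement CS (S n) ∧ (S n).length = n + 1 ∧ S n = (S (n + 1)).dropLast

/-- [S]: the subset of the canonical Tree induced by a basic sequence S. -/
def SeqSet {Ag : Type} [Fintype Ag] (CS : Set (Form Ag))
    (S : ℕ → List (Set (Form Ag))) : Set (CanW Ag CS) :=
  {m | m = none ∨ ∃ p : {C : Set (List (Set (Form Ag))) // IsEqClass CS C} × ℕ,
        m = some p ∧ ∃ n, p.1.val = eqcl CS (S n)}

/-- The standard canonical moment ([ξ]_≡, k). -/
def stdM {Ag : Type} [Fintype Ag] (CS : Set (Form Ag)) (ξ : List (Set (Form Ag)))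
    (hξ : IsElement CS ξ) (k : ℕ) : CanW Ag CS :=
  some (⟨eqcl CS ξ, ⟨ξ, hξ, rfl⟩⟩, k)

/-- H_m in the canonical Tree. -/
def canHist {Ag : Type} [Fintype Ag] (CS : Set (Form Ag)) (m : CanW Ag CS) :
    Set (Set (CanW Ag CS)) :=
  {h | IsMaxChain (canLe CS) h ∧ m ∈ h}

/-- τ is the intersection m ⊓ h of a standard moment m with a history h. -/
def InterRel {Ag : Type} [Fintype Ag] (CS : Set (Form Ag)) (m : CanW Ag CS)
    (h : Set (CanW Ag CS)) (τ : List (Set (Form Ag))) : Prop :=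
  (∃ p, m = some p ∧ τ ∈ p.1.val) ∧
  ∃ S, BasicSeq CS S ∧ h = SeqSet CS S ∧ ∃ n, τ = S n

/-- The intersection m ⊓ h as a function (via choice; `[]` if undefined). -/
noncomputable def interF {Ag : Type} [Fintype Ag] (CS : Set (Form Ag)) (m : CanW Ag CS)
    (h : Set (CanW Ag CS)) : List (Set (Form Ag)) :=
  if hx : ∃ τ, InterRel CS m h τ then hx.choose else []

/-- The canonical choice function: the cell of h at m for agent j. -/
noncomputable def canChoice {Ag : Type} [Fintype Ag] (CS : Set (Form Ag)) (m : CanW Ag CS)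
    (j : Ag) (h : Set (CanW Ag CS)) : Set (Set (CanW Ag CS)) :=
  if m.isSome = true ∧ canHeight m = 0 then
    {h' | h' ∈ canHist CS m ∧
      ∀ A : Form Ag, Form.stit j A ∈ endSet (interF CS m h) → A ∈ endSet (interF CS m h')}
  else canHist CS m

/-- The canonical Act function. -/
noncomputable def canAct {Ag : Type} [Fintype Ag] (CS : Set (Form Ag)) :
    CanW Ag CS → Set (CanW Ag CS) → Set Pol
  | none, _ => ∅
  | some p, h =>
      if p.2 = 0 then
        {t | ∃ A : Form Ag, Form.proven t A ∈ endSet (interF CS (some p) h) ∨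
              ∃ j : Ag, Form.prove j t A ∈ endSet (interF CS (some p) h)}
      else {t | ∃ A : Form Ag, Form.proven t A ∈ endSet (interF CS (some p) h)}

/-- Act_m in the canonical model. -/
noncomputable def canActM {Ag : Type} [Fintype Ag] (CS : Set (Form Ag)) (m : CanW Ag CS) :
    Set Pol :=
  {t | ∀ g ∈ canHist CS m, t ∈ canAct CS m g}

/-- end_m = ⋂_{h ∈ H_m} end(m ⊓ h). -/
noncomputable def endM {Ag : Type} [Fintype Ag] (CS : Set (Form Ag)) (m : CanW Ag CS) :
    Set (Form Ag) :=
  {A | ∀ h ∈ canHist CS m, A ∈ endSet (interF CS m h)}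

/-- The canonical epistemic accessibility relation. -/
def canR {Ag : Type} [Fintype Ag] (CS : Set (Form Ag)) : CanW Ag CS → CanW Ag CS → Prop
  | none, _ => True
  | some _, none => False
  | some p, some q =>
      ∀ (A : Form Ag), ∀ ξ ∈ p.1.val, Form.know A ∈ endSet ξ → Form.know A ∈ endM CS (some q)

/-- The canonical admissible evidence function. -/
noncomputable def canE {Ag : Type} [Fintype Ag] (CS : Set (Form Ag)) :
    CanW Ag CS → Pol → Set (Form Ag)
  | none, t => {A | Prov CS (Form.pf t A)}
  | some p, t => {A | Form.pf t A ∈ endM CS (some p)}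

/-- The canonical valuation. -/
def canV {Ag : Type} [Fintype Ag] (CS : Set (Form Ag)) (n : ℕ) (m : CanW Ag CS)
    (h : Set (CanW Ag CS)) : Prop :=
  m.isSome = true ∧ Form.var n ∈ endSet (interF CS m h)

/-- The canonical model M^Ag_CS (unirelational: R_e = R). -/
noncomputable def canModel {Ag : Type} [Fintype Ag] (CS : Set (Form Ag)) : PreModel Ag where
  W := CanW Ag CS
  le := canLe CS
  Choice := canChoice CS
  Act := canAct CS
  R := canR CS
  Re := canR CS
  E := canE CS
  V := canV CS

/-- The alternative system Π'(CS) with axiom scheme (A_S4) in place of rule (S4). -/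
inductive Prov' {Ag : Type} [Fintype Ag] (CS : Set (Form Ag)) : Form Ag → Prop
  | ax {A : Form Ag} : Ax A → Prov' CS A
  | as4 (l : List (Pol × Form Ag)) (hne : l ≠ []) :
      Prov' CS ((Form.know (Form.disjList (l.map fun p => (Form.proven p.1 p.2).neg))).imp
        (Form.disjList (l.map fun p => bigConjAg fun j => (Form.prove j p.1 p.2).neg)))
  | mp {A B : Form Ag} : Prov' CS (A.imp B) → Prov' CS A → Prov' CS B
  | knec {A : Form Ag} : Prov' CS A → Prov' CS (Form.know A)
  | rcs {A : Form Ag} : A ∈ CS → Prov' CS A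

/-- A is moment-determinate in M. -/
def MomentDet {Ag : Type} (M : PreModel Ag) (A : Form Ag) : Prop :=
  ∀ m h h', M.HistAt m h → M.HistAt m h' → (M.Sat A m h ↔ M.Sat A m h')

namespace PreModel

variable {Ag : Type}

theorem sat_imp (M : PreModel Ag) (A B : Form Ag) (m : M.W) (h : Set M.W) :
    M.Sat (A.imp B) m h ↔ (M.Sat A m h → M.Sat B m h) := by
  simp only [Form.imp, Sat]; tauto

theorem sat_or (M : PreModel Ag) (A B : Form Ag) (m : M.W) (h : Set M.W) :
    M.Sat (A.or B) m h ↔ (M.Sat A m h ∨ M.Sat B m h) := by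
  simp only [Form.or, Sat]; tauto

theorem sat_falsum (M : PreModel Ag) (m : M.W) (h : Set M.W) :
    ¬ M.Sat Form.falsum m h := by
  simp only [Form.falsum, Sat]; tauto

theorem sat_conj (M : PreModel Ag) (l : List (Form Ag)) (m : M.W) (h : Set M.W) :
    M.Sat (Form.conjList l) m h ↔ ∀ A ∈ l, M.Sat A m h := by
  induction l with
  | nil => simp [Form.conjList, Sat, sat_falsum]
  | cons A l ih =>
    cases l with
    | nil => simp [Form.conjList]
    | cons B l => rw [Form.conjList, Sat, ih]; simp

theorem sat_disj (M : PreModel Ag) (l : List (Form Ag)) (m : M.W) (h : Set M.W) :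
    M.Sat (Form.disjList l) m h ↔ ∃ A ∈ l, M.Sat A m h := by
  induction l with
  | nil => simp [Form.disjList, sat_falsum]
  | cons A l ih =>
    cases l with
    | nil => simp [Form.disjList]
    | cons B l => rw [Form.disjList, sat_or, ih]; simp

theorem sat_bigConj [Fintype Ag] (M : PreModel Ag) (F : Ag → Form Ag) (m : M.W) (h : Set M.W) :
    M.Sat (bigConjAg F) m h ↔ ∀ j, M.Sat (F j) m h := by
  simp [bigConjAg, sat_conj]

theorem sat_dia (M : PreModel Ag) (A : Form Ag) (m : M.W) (h : Set M.W) :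
    M.Sat A.dia m h ↔ ∃ h', M.HistAt m h' ∧ M.Sat A m h' := by
  simp [Form.dia, Sat]

theorem sat_diaStit (M : PreModel Ag) (j : Ag) (A : Form Ag) (m : M.W) (h : Set M.W) :
    M.Sat (A.diaStit j) m h ↔ ∃ h' ∈ M.Choice m j h, M.Sat A m h' := by
  simp [Form.diaStit, Sat]

theorem IsJStit.ax_sound [Fintype Ag] {M : PreModel Ag} (J : M.IsJStit) {A : Form Ag}
    (hA : Ax A) (m : M.W) (h : Set M.W) (hh : M.HistAt m h) : M.Sat A m h := by
  cases hA with
  | pl1 A B => simp only [sat_imp]; tauto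
  | pl2 A B C => simp only [sat_imp]; tauto
  | pl3 A B => simp only [sat_imp, Sat]; tauto
  | boxK A B =>
    simp only [sat_imp, Sat]
    exact fun h1 h2 g hg => h1 g hg (h2 g hg)
  | boxT A => simp only [sat_imp, Sat]; exact fun h1 => h1 h hh
  | box4 A => simp only [sat_imp, Sat]; exact fun h1 _ _ => h1
  | box5 A => simp only [sat_imp, sat_dia, Sat]; exact fun h1 _ _ => h1
  | stitK j A B =>
    simp only [sat_imp, Sat]
    exact fun h1 h2 g hg => h1 g hg (h2 g hg)
  | stitT j A => simp only [sat_imp, Sat]; exact fun h1 => h1 h (J.choice_self m j h hh)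
  | stit4 j A =>
    simp only [sat_imp, Sat]
    intro h1 g hg
    rw [J.choice_cells m j h hh g hg]
    exact h1
  | stit5 j A =>
    simp only [sat_imp, sat_diaStit, Sat]
    intro h1 g hg
    rw [J.choice_cells m j h hh g hg]
    exact h1
  | a2 j A =>
    simp only [sat_imp, Sat]
    exact fun h1 g hg => h1 g (J.choice_hist m j h hh g hg)
  | a3 l hne hl =>
    simp only [sat_imp, sat_dia, sat_conj, List.forall_mem_map, Sat]
    intro h1
    choose! F hF1 hF2 using h1
    have key : ∀ j : Ag, ∃ g, M.HistAt m g ∧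
        ∀ p ∈ l, p.1 = j → ∀ k ∈ M.Choice m j g, M.Sat p.2 m k := by
      intro j
      by_cases hj : ∃ p ∈ l, p.1 = j
      · obtain ⟨p, hp, rfl⟩ := hj
        refine ⟨F p, hF1 p hp, fun q hq hqp => ?_⟩
        have : q = p := by
          by_contra hne'
          have : Std.Symm (fun a b : Ag × Form Ag => a.1 ≠ b.1) := ⟨fun _ _ e => Ne.symm e⟩
          exact hl.forall hq hp hne' hqp
        subst this
        exact hF2 q hq
      · exact ⟨h, hh, fun p hp hpj => absurd ⟨p, hp, hpj⟩ hj⟩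
    choose f hf1 hf2 using key
    obtain ⟨g, hg⟩ := J.indep m f hf1
    obtain ⟨p0, hp0⟩ := List.exists_mem_of_ne_nil l hne
    refine ⟨g, J.choice_hist m p0.1 _ (hf1 _) g (hg _), fun p hp => ?_⟩
    rw [J.choice_cells m p.1 _ (hf1 _) g (hg _)]
    exact hf2 p.1 p hp rfl
  | a4 s t A B =>
    simp only [sat_imp, Sat]
    exact fun h1 h2 => ⟨J.evApp m s t A B h1.1 h2.1,
      fun m' h' r hh' => h1.2 m' h' r hh' (h2.2 m' h' r hh')⟩
  | a5 t A =>
    simp only [sat_imp, Sat]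
    exact fun h1 => ⟨⟨J.evBang m t A h1.1, fun m' h' r hh' => ⟨J.monoEv t m m' r h1.1,
      fun m2 h2 r2 hh2 => h1.2 m2 h2 (J.re_trans _ _ _ r r2) hh2⟩⟩,
      fun m' h' r hh' => h1.2 m' h' (J.r_sub_re _ _ r) hh'⟩
  | a6 s t A =>
    simp only [sat_imp, sat_or, Sat]
    rintro (h1 | h1)
    · exact ⟨J.evSum m s t (Or.inl h1.1), h1.2⟩
    · exact ⟨J.evSum m s t (Or.inr h1.1), h1.2⟩
  | kK A B =>
    simp only [sat_imp, Sat]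
    exact fun h1 h2 m' h' r hh' => h1 m' h' r hh' (h2 m' h' r hh')
  | kT A => simp only [sat_imp, Sat]; exact fun h1 => h1 m h (J.r_refl m) hh
  | k4 A =>
    simp only [sat_imp, Sat]
    exact fun h1 m1 _ r1 _ m2 h2 r2 hh2 => h1 m2 h2 (J.r_trans _ _ _ r1 r2) hh2
  | a8 A =>
    simp only [sat_imp, Sat]
    exact fun h1 _ _ m1 _ r1 _ h2 hh2 => h1 m1 h2 r1 hh2
  | b9 j t A =>
    simp only [sat_imp, Sat]
    rintro ⟨h1, h2, h3⟩
    refine ⟨fun h => h3 h.1, fun g hg => ⟨?_, h2, h3⟩, fun hb => h3 ?_, h2⟩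
    · show ∀ k ∈ M.Choice m j g, _
      rw [J.choice_cells m j h hh g hg]
      exact h1
    · exact fun g hg => (hb g hg).1 g (J.choice_self m j g hg)
  | b10 j t A B =>
    simp only [sat_imp, Sat]
    exact fun h1 => ⟨h1.1.1, h1.2, h1.1.2.2⟩
  | b11 t A =>
    simp only [sat_imp, Sat]
    rintro ⟨h1, h2⟩
    refine ⟨fun m' h' r hh' => ?_, h2⟩
    have r' := J.r_sub_re _ _ r
    exact ⟨J.transparency _ _ r' h1, J.monoEv t m m' r' h2.1,
      fun m2 k2 r2 hk2 => h2.2 m2 k2 (J.re_trans _ _ _ r' r2) hk2⟩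
  | b12 t A B =>
    simp only [sat_imp, Sat]
    exact fun h1 => ⟨h1.1.1, h1.2⟩
  | b13 j t A =>
    simp only [sat_imp, sat_diaStit, sat_bigConj, Sat]
    intro h1
    by_cases hc : t ∈ M.ActC m h j
    · refine ⟨h, J.choice_self m j h hh, fun i hi => h1 ⟨hc, hi.2⟩⟩
    · have : ∃ g ∈ M.Choice m j h, t ∉ M.Act m g := by
        by_contra hcon
        push Not at hcon
        exact hc hcon
      obtain ⟨g, hg, hgt⟩ := this
      exact ⟨g, hg, fun i hi =>
        hgt (hi.1 g (J.choice_self m i g (J.choice_hist m j h hh g hg)))⟩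

/-- A history on which some non-guaranteed proof is presented extends beyond `m`. -/
theorem IsJStit.exists_later {M : PreModel Ag} (J : M.IsJStit) {m : M.W} {h : Set M.W}
    (hh : M.HistAt m h) {t : Pol} (ht : t ∈ M.Act m h) (hn : t ∉ M.ActM m) :
    ∃ m' ∈ h, M.lt m m' := by
  by_contra hcon
  push Not at hcon
  have hle : ∀ x ∈ h, M.le x m := by
    intro x hx
    by_cases hxm : x = m
    · rw [hxm]; exact J.le_refl m
    · rcases hh.1.1 hx hh.2 hxm with h1 | h1
      · exact h1
      · exact absurd ⟨h1, fun e => hxm e.symm⟩ (hcon x hx)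
  apply hn
  intro g hg
  have hsub : g ⊆ h := by
    intro y hy
    have hym : M.le m y ∨ M.le y m := by
      by_cases hym : y = m
      · rw [hym]; exact Or.inl (J.le_refl m)
      · exact (hg.1.1 hy hg.2 hym).symm
    have hch : IsChain M.le (insert y h) := by
      refine hh.1.1.insert fun x hx _ => ?_
      rcases hym with h1 | h1
      · exact Or.inr (J.le_trans _ _ _ (hle x hx) h1)
      · exact J.noBackBranch m y x h1 (hle x hx)
    have := hh.1.2 hch (Set.subset_insert y h)
    rw [this]
    exact Set.mem_insert y h
  rw [hg.1.2 hh.1.1 hsub]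
  exact ht

end PreModel

open PreModel in
theorem soundness {Ag : Type} [Fintype Ag] [Nonempty Ag]
    (CS : Set (Form Ag)) (hCS : IsConstSpec CS) (A : Form Ag) (hA : Prov CS A) :
    ∀ M : PreModel Ag, M.IsJStit → M.CSNormal CS →
      ∀ (m : M.W) (h : Set M.W), M.HistAt m h → M.Sat A m h := by
  intro M J N
  induction hA with
  | ax hax => exact J.ax_sound hax
  | mp _ _ ih1 ih2 => exact fun m h hh => (sat_imp M _ _ m h).1 (ih1 m h hh) (ih2 m h hh)
  | knec _ ih => exact fun m h _ m' h' _ hh' => ih m' h' hh'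
  | @s4 A l hne _ ih =>
    intro m h hh
    rw [sat_imp, sat_disj]
    intro hK
    by_contra hcon
    have hP : ∀ p ∈ l, ∃ j, M.Sat (Form.prove j p.1 p.2) m h := by
      intro p hp
      by_contra hno
      push Not at hno
      exact hcon ⟨_, List.mem_map_of_mem hp, (sat_bigConj M _ m h).2 hno⟩
    have hAct : ∀ p ∈ l, p.1 ∈ M.Act m h := by
      intro p hp
      obtain ⟨j, hj⟩ := hP p hp
      exact hj.1 h (J.choice_self m j h hh)
    obtain ⟨p0, hp0⟩ := List.exists_mem_of_ne_nil l hne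
    obtain ⟨j0, hj0⟩ := hP p0 hp0
    obtain ⟨m', hm', hlt⟩ := J.exists_later hh (hAct p0 hp0) hj0.2.2
    have hR := J.futureMatters _ _ hlt.1
    have hh' : M.HistAt m' h := ⟨hh.1, hm'⟩
    have h1 := (sat_imp M _ _ m' h).1 (ih m' h hh')
      (fun m2 h2 r2 hh2 => hK m2 h2 (J.r_trans _ _ _ hR r2) hh2)
    rw [sat_disj] at h1
    obtain ⟨_, hB, hsat⟩ := h1
    obtain ⟨p, hp, rfl⟩ := List.mem_map.1 hB
    obtain ⟨j, hj⟩ := hP p hp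
    have hRe := J.r_sub_re _ _ hR
    refine hsat ⟨fun g hg => ?_, J.monoEv _ _ _ hRe hj.2.1.1,
      fun m2 h2 r2 hh2 => hj.2.1.2 m2 h2 (J.re_trans _ _ _ hRe r2) hh2⟩
    have hgm : M.HistAt m g := by
      refine ⟨hg.1, ?_⟩
      have hch : IsChain M.le (insert m g) := by
        refine hg.1.1.insert fun x hx _ => ?_
        by_cases hxm : m' = x
        · rw [← hxm]; exact Or.inl hlt.1
        · rcases hg.1.1 hg.2 hx hxm with h2 | h2
          · exact Or.inl (J.le_trans _ _ _ hlt.1 h2)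
          · exact J.noBackBranch m' m x hlt.1 h2
      rw [hg.1.2 hch (Set.subset_insert m g)]
      exact Set.mem_insert m g
    apply J.expand m m' g hlt hg
    rw [← J.divide m h g hh hgm ⟨m', hlt, hm', hg.2⟩]
    exact hAct p hp
  | @rcs A hmem =>
    have hform := hCS.1 A hmem
    induction hform with
    | base c hax => exact fun m h _ => ⟨N c m _ hmem, fun m' h' _ hh' => J.ax_sound hax m' h' hh'⟩
    | step c hB ih =>
      refine fun m h _ => ⟨N c m _ hmem, fun m' h' _ hh' => ih ?_ m' h' hh'⟩
      cases hB with
      | base c' _ => exact hCS.2 _ _ _ hmem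
      | step c' _ => exact hCS.2 _ _ _ hmem
end

section
/- Compactness: for every constant specification CS and every set Γ ⊆ Form^Ag, Γ is satisfiable at some moment-history pair of some CS-normal jstit model if and only if every finite subset of Γ is satisfiable at some moment-history pair of some CS-normal jstit model. -/
open Classical

namespace JComp

open PreModel

/-- Pointed CS-normal jstit models. -/
structure Pt {Ag : Type} [Fintype Ag] (CS : Set (Form Ag)) : Type 1 where
  M : PreModel Ag
  m : M.W
  h : Set M.W
  hJ : M.IsJStit
  hN : M.CSNormal CS
  hH : M.HistAt m h

/-- Base items: formulas together with auxiliary semantic atoms. -/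
inductive BI (Ag : Type) : Type
  | f : Form Ag → BI Ag
  | ev : Pol → Form Ag → BI Ag
  | act : Pol → BI Ag
  | actM : Pol → BI Ag
  | actC : Ag → Pol → BI Ag
  | ke : Form Ag → BI Ag

/-- Items: base items and possibility of a finite list of literals at the moment. -/
inductive Itm (Ag : Type) : Type
  | b : BI Ag → Itm Ag
  | dia : List (BI Ag × Prop) → Itm Ag

variable {Ag : Type} [Fintype Ag] {CS : Set (Form Ag)}

/-- Moving the point of a pointed model. -/
def Pt.mv (p : Pt CS) (m' : p.M.W) (h' : Set p.M.W) (hh : p.M.HistAt m' h') : Pt CS :=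
  ⟨p.M, m', h', p.hJ, p.hN, hh⟩

def BI.holds (p : Pt CS) : BI Ag → Prop
  | .f A => p.M.Sat A p.m p.h
  | .ev t A => A ∈ p.M.E p.m t
  | .act t => t ∈ p.M.Act p.m p.h
  | .actM t => t ∈ p.M.ActM p.m
  | .actC j t => t ∈ p.M.ActC p.m p.h j
  | .ke A => ∀ m' h', p.M.Re p.m m' → p.M.HistAt m' h' → p.M.Sat A m' h'

def Itm.holds (p : Pt CS) : Itm Ag → Prop
  | .b a => a.holds p
  | .dia L => ∃ h', ∃ hh : p.M.HistAt p.m h', ∀ q ∈ L, (q.1.holds (p.mv p.m h' hh) ↔ q.2)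

inductive IsM : Itm Ag → Prop
  | box (B) : IsM (.b (.f (.box B)))
  | know (B) : IsM (.b (.f (.know B)))
  | ke (B) : IsM (.b (.ke B))
  | ev (t B) : IsM (.b (.ev t B))
  | actM (t) : IsM (.b (.actM t))
  | dia (L) : IsM (.dia L)

inductive IsS (j : Ag) : BI Ag → Prop
  | stit (B) : IsS j (.f (.stit j B))
  | actC (t) : IsS j (.actC j t)

inductive IsKe : Itm Ag → Prop
  | ke (B) : IsKe (.b (.ke B))
  | ev (t B) : IsKe (.b (.ev t B))
  | actM (t) : IsKe (.b (.actM t))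

inductive IsK : Itm Ag → Prop
  | know (B) : IsK (.b (.f (.know B)))
  | kee {a} : IsKe a → IsK a

theorem IsKe.isM {a : Itm Ag} (h : IsKe a) : IsM a := by
  cases h <;> constructor

theorem IsK.isM {a : Itm Ag} (h : IsK a) : IsM a := by
  cases h with
  | know B => constructor
  | kee h => exact h.isM

theorem IsM.inv {a : Itm Ag} (h : IsM a) (p : Pt CS) (h' : Set p.M.W) (hh : p.M.HistAt p.m h') :
    a.holds (p.mv p.m h' hh) ↔ a.holds p := by
  cases h <;> exact Iff.rfl

theorem IsS.inv {j : Ag} {a : BI Ag} (h : IsS j a) (p : Pt CS) (h' : Set p.M.W)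
    (hh : p.M.HistAt p.m h') (hc : h' ∈ p.M.Choice p.m j p.h) :
    a.holds (p.mv p.m h' hh) ↔ a.holds p := by
  have e := p.hJ.choice_cells p.m j p.h p.hH h' hc
  cases h with
  | stit B =>
    show (∀ g ∈ p.M.Choice p.m j h', p.M.Sat B p.m g) ↔ (∀ g ∈ p.M.Choice p.m j p.h, p.M.Sat B p.m g)
    rw [e]
  | actC t =>
    show (∀ g ∈ p.M.Choice p.m j h', t ∈ p.M.Act p.m g) ↔ (∀ g ∈ p.M.Choice p.m j p.h, t ∈ p.M.Act p.m g)
    rw [e]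

theorem IsKe.pres {a : Itm Ag} (h : IsKe a) (p : Pt CS) (m' : p.M.W) (h' : Set p.M.W)
    (hh : p.M.HistAt m' h') (hR : p.M.Re p.m m') (ha : a.holds p) : a.holds (p.mv m' h' hh) := by
  cases h with
  | ke B =>
    intro m2 h2 hr hm
    exact ha m2 h2 (p.hJ.re_trans _ _ _ hR hr) hm
  | ev t B => exact p.hJ.monoEv t _ _ hR ha
  | actM t => exact p.hJ.transparency _ _ hR ha

theorem IsK.pres {a : Itm Ag} (h : IsK a) (p : Pt CS) (m' : p.M.W) (h' : Set p.M.W)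
    (hh : p.M.HistAt m' h') (hR : p.M.R p.m m') (ha : a.holds p) : a.holds (p.mv m' h' hh) := by
  cases h with
  | know B =>
    intro m2 h2 hr hm
    exact ha m2 h2 (p.hJ.r_trans _ _ _ hR hr) hm
  | kee h => exact h.pres p m' h' hh (p.hJ.r_sub_re _ _ hR) ha

/-- Limits of theories of pointed models. -/
def LimSet (CS : Set (Form Ag)) : Set (Set (Itm Ag)) :=
  {X | ∀ F : Finset (Itm Ag), ∃ p : Pt CS, ∀ a ∈ F, (a ∈ X ↔ a.holds p)}

abbrev PP (CS : Set (Form Ag)) : Type := {X : Set (Itm Ag) // X ∈ LimSet CS}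

theorem compact (C : Itm Ag → Prop → Prop)
    (h : ∀ F : Finset (Itm Ag), ∃ p : Pt CS, ∀ a ∈ F, ∀ v, C a v → (a.holds p ↔ v)) :
    ∃ X : PP CS, ∀ a v, C a v → (a ∈ X.1 ↔ v) := by
  choose p hp using h
  let U : Ultrafilter (Finset (Itm Ag)) := Ultrafilter.of Filter.atTop
  have hU : (U : Filter (Finset (Itm Ag))) ≤ Filter.atTop := Ultrafilter.of_le _
  let X : Set (Itm Ag) := {a | ∀ᶠ F in (U : Filter (Finset (Itm Ag))), a.holds (p F)}
  have key : ∀ a, ∀ᶠ F in (U : Filter (Finset (Itm Ag))), (a ∈ X ↔ a.holds (p F)) := by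
    intro a
    by_cases ha : a ∈ X
    · have ha' : ∀ᶠ F in (U : Filter (Finset (Itm Ag))), a.holds (p F) := ha
      filter_upwards [ha'] with F hF
      exact ⟨fun _ => hF, fun _ => ha⟩
    · have ha' : ∀ᶠ F in (U : Filter (Finset (Itm Ag))), ¬ a.holds (p F) :=
        Ultrafilter.eventually_not.2 ha
      filter_upwards [ha'] with F hF
      exact ⟨fun h => absurd h ha, fun h => absurd h hF⟩
  refine ⟨⟨X, ?_⟩, ?_⟩
  · intro F
    have : ∀ᶠ G in (U : Filter (Finset (Itm Ag))), ∀ a ∈ F, (a ∈ X ↔ a.holds (p G)) :=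
      (Filter.eventually_all_finset F).2 fun a _ => key a
    obtain ⟨G, hG⟩ := this.exists
    exact ⟨p G, hG⟩
  · intro a v hC
    have h1 : ∀ᶠ F in (U : Filter (Finset (Itm Ag))), {a} ≤ F :=
      (Filter.eventually_ge_atTop ({a} : Finset (Itm Ag))).filter_mono hU
    obtain ⟨F, hF1, hF2⟩ := (h1.and (key a)).exists
    exact hF2.trans (hp F a (hF1 (by simp)) v hC)

def eqM (X Y : PP CS) : Prop := ∀ a, IsM a → (a ∈ X.1 ↔ a ∈ Y.1)
def eqS (j : Ag) (X Y : PP CS) : Prop := eqM X Y ∧ ∀ a, IsS j a → (Itm.b a ∈ X.1 ↔ Itm.b a ∈ Y.1)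
def relK (X Y : PP CS) : Prop := ∀ a, IsK a → a ∈ X.1 → a ∈ Y.1
def relKe (X Y : PP CS) : Prop := ∀ a, IsKe a → a ∈ X.1 → a ∈ Y.1

theorem eqM.refl (X : PP CS) : eqM X X := fun _ _ => Iff.rfl
theorem eqM.symm {X Y : PP CS} (h : eqM X Y) : eqM Y X := fun a ha => (h a ha).symm
theorem eqM.trans {X Y Z : PP CS} (h : eqM X Y) (h' : eqM Y Z) : eqM X Z :=
  fun a ha => (h a ha).trans (h' a ha)
theorem eqS.refl (j : Ag) (X : PP CS) : eqS j X X := ⟨eqM.refl X, fun _ _ => Iff.rfl⟩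
theorem eqS.symm {j : Ag} {X Y : PP CS} (h : eqS j X Y) : eqS j Y X :=
  ⟨h.1.symm, fun a ha => (h.2 a ha).symm⟩
theorem eqS.trans {j : Ag} {X Y Z : PP CS} (h : eqS j X Y) (h' : eqS j Y Z) : eqS j X Z :=
  ⟨h.1.trans h'.1, fun a ha => (h.2 a ha).trans (h'.2 a ha)⟩
theorem eqM.relK {X Y : PP CS} (h : eqM X Y) : relK X Y := fun a ha => (h a ha.isM).1
theorem relK.refl (X : PP CS) : relK X X := fun _ _ h => h
theorem relK.trans {X Y Z : PP CS} (h : relK X Y) (h' : relK Y Z) : relK X Z :=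
  fun a ha hx => h' a ha (h a ha hx)
theorem relKe.trans {X Y Z : PP CS} (h : relKe X Y) (h' : relKe Y Z) : relKe X Z :=
  fun a ha hx => h' a ha (h a ha hx)
theorem relK.relKe {X Y : PP CS} (h : relK X Y) : relKe X Y := fun a ha => h a (.kee ha)

/-- Local transfer. -/
theorem loc1 (X : PP CS) (a : Itm Ag) : ∃ p : Pt CS, (a ∈ X.1 ↔ a.holds p) := by
  obtain ⟨p, hp⟩ := X.2 {a}
  exact ⟨p, hp a (by simp)⟩
theorem loc2 (X : PP CS) (a b : Itm Ag) :
    ∃ p : Pt CS, (a ∈ X.1 ↔ a.holds p) ∧ (b ∈ X.1 ↔ b.holds p) := by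
  obtain ⟨p, hp⟩ := X.2 {a, b}
  exact ⟨p, hp a (by simp), hp b (by simp)⟩
theorem loc3 (X : PP CS) (a b c : Itm Ag) :
    ∃ p : Pt CS, (a ∈ X.1 ↔ a.holds p) ∧ (b ∈ X.1 ↔ b.holds p) ∧ (c ∈ X.1 ↔ c.holds p) := by
  obtain ⟨p, hp⟩ := X.2 {a, b, c}
  exact ⟨p, hp a (by simp), hp b (by simp), hp c (by simp)⟩

theorem M_ex (X : PP CS) (a c : Itm Ag) (hc : c ∉ X.1)
    (hs : ∀ p : Pt CS, ¬ c.holds p → ∃ h', ∃ hh : p.M.HistAt p.m h', ¬ a.holds (p.mv p.m h' hh)) :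
    ∃ Y : PP CS, eqM X Y ∧ a ∉ Y.1 := by
  obtain ⟨Y, hY⟩ := compact (CS := CS)
    (fun b v => (IsM b ∧ v = (b ∈ X.1)) ∨ (b = a ∧ v = False)) (by
      intro F
      obtain ⟨p, hp⟩ := X.2 (insert c F)
      obtain ⟨h', hh, hn⟩ := hs p (fun h => hc ((hp c (by simp)).2 h))
      refine ⟨p.mv p.m h' hh, ?_⟩
      rintro b hb v (⟨hM, rfl⟩ | ⟨rfl, rfl⟩)
      · rw [hM.inv, hp b (by simp [hb])]
      · simpa using hn)
  refine ⟨Y, fun b hb => (hY b _ (Or.inl ⟨hb, rfl⟩)).symm, ?_⟩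
  simpa using hY a False (Or.inr ⟨rfl, rfl⟩)

theorem S_ex (j : Ag) (X : PP CS) (a c : Itm Ag) (hc : c ∉ X.1)
    (hs : ∀ p : Pt CS, ¬ c.holds p → ∃ h' ∈ p.M.Choice p.m j p.h,
      ∀ hh : p.M.HistAt p.m h', ¬ a.holds (p.mv p.m h' hh)) :
    ∃ Y : PP CS, eqS j X Y ∧ a ∉ Y.1 := by
  obtain ⟨Y, hY⟩ := compact (CS := CS)
    (fun b v => (IsM b ∧ v = (b ∈ X.1)) ∨ (∃ b', b = .b b' ∧ IsS j b' ∧ v = (b ∈ X.1)) ∨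
      (b = a ∧ v = False)) (by
      intro F
      obtain ⟨p, hp⟩ := X.2 (insert c F)
      obtain ⟨h', hc', hn⟩ := hs p (fun h => hc ((hp c (by simp)).2 h))
      have hh := p.hJ.choice_hist _ _ _ p.hH _ hc'
      refine ⟨p.mv p.m h' hh, ?_⟩
      rintro b hb v (⟨hM, rfl⟩ | ⟨b', rfl, hS, rfl⟩ | ⟨rfl, rfl⟩)
      · rw [hM.inv, hp b (by simp [hb])]
      · exact (hS.inv p h' hh hc').trans (hp (.b b') (by simp [hb])).symm
      · simpa using hn hh)
  refine ⟨Y, ⟨fun b hb => (hY b _ (Or.inl ⟨hb, rfl⟩)).symm,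
    fun b hb => (hY _ _ (Or.inr (Or.inl ⟨b, rfl, hb, rfl⟩))).symm⟩, ?_⟩
  simpa using hY a False (Or.inr (Or.inr ⟨rfl, rfl⟩))

theorem K_ex (X : PP CS) (a c : Itm Ag) (hc : c ∉ X.1)
    (hs : ∀ p : Pt CS, ¬ c.holds p → ∃ m' h', ∃ hh : p.M.HistAt m' h',
      p.M.R p.m m' ∧ ¬ a.holds (p.mv m' h' hh)) :
    ∃ Y : PP CS, relK X Y ∧ a ∉ Y.1 := by
  obtain ⟨Y, hY⟩ := compact (CS := CS)
    (fun b v => (IsK b ∧ b ∈ X.1 ∧ v = True) ∨ (b = a ∧ v = False)) (by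
      intro F
      obtain ⟨p, hp⟩ := X.2 (insert c F)
      obtain ⟨m', h', hh, hR, hn⟩ := hs p (fun h => hc ((hp c (by simp)).2 h))
      refine ⟨p.mv m' h' hh, ?_⟩
      rintro b hb v (⟨hM, hX, rfl⟩ | ⟨rfl, rfl⟩)
      · simpa using hM.pres p m' h' hh hR ((hp b (by simp [hb])).1 hX)
      · simpa using hn)
  refine ⟨Y, fun b hb hX => by simpa using (hY b True (Or.inl ⟨hb, hX, rfl⟩)), ?_⟩
  simpa using hY a False (Or.inr ⟨rfl, rfl⟩)

theorem Ke_ex (X : PP CS) (a c : Itm Ag) (hc : c ∉ X.1)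
    (hs : ∀ p : Pt CS, ¬ c.holds p → ∃ m' h', ∃ hh : p.M.HistAt m' h',
      p.M.Re p.m m' ∧ ¬ a.holds (p.mv m' h' hh)) :
    ∃ Y : PP CS, relKe X Y ∧ a ∉ Y.1 := by
  obtain ⟨Y, hY⟩ := compact (CS := CS)
    (fun b v => (IsKe b ∧ b ∈ X.1 ∧ v = True) ∨ (b = a ∧ v = False)) (by
      intro F
      obtain ⟨p, hp⟩ := X.2 (insert c F)
      obtain ⟨m', h', hh, hR, hn⟩ := hs p (fun h => hc ((hp c (by simp)).2 h))
      refine ⟨p.mv m' h' hh, ?_⟩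
      rintro b hb v (⟨hM, hX, rfl⟩ | ⟨rfl, rfl⟩)
      · simpa using hM.pres p m' h' hh hR ((hp b (by simp [hb])).1 hX)
      · simpa using hn)
  refine ⟨Y, fun b hb hX => by simpa using (hY b True (Or.inl ⟨hb, hX, rfl⟩)), ?_⟩
  simpa using hY a False (Or.inr ⟨rfl, rfl⟩)

/-- Independence of agents for limit points. -/
theorem indepPP (Y : PP CS) (x : Ag → PP CS) (hx : ∀ j, eqM Y (x j)) :
    ∃ Z : PP CS, ∀ j, eqS j (x j) Z := by
  obtain ⟨Z, hZ⟩ := compact (CS := CS)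
    (fun b v => (IsM b ∧ v = (b ∈ Y.1)) ∨
      (∃ j b', b = .b b' ∧ IsS j b' ∧ v = (b ∈ (x j).1))) (by
      intro F
      let L : Ag → List (BI Ag × Prop) := fun j =>
        (F.toList.filterMap (fun a => match a with
          | .b a => if IsS j a then some (a, (Itm.b a ∈ (x j).1)) else none
          | .dia _ => none))
      have hL : ∀ j (q : BI Ag × Prop), q ∈ L j ↔
          (Itm.b q.1 ∈ F ∧ IsS j q.1 ∧ q.2 = (Itm.b q.1 ∈ (x j).1)) := by
        rintro j ⟨q, v⟩
        simp only [L, List.mem_filterMap, Finset.mem_toList]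
        constructor
        · rintro ⟨a, ha, h⟩
          cases a with
          | b a =>
            simp only at h
            split_ifs at h with hs
            simp only [Option.some.injEq, Prod.mk.injEq] at h
            obtain ⟨rfl, rfl⟩ := h
            exact ⟨ha, hs, rfl⟩
          | dia l => simp at h
        · rintro ⟨h1, h2, h3⟩
          refine ⟨.b q, h1, ?_⟩
          have h2' : IsS j q := h2
          have h3' : v = (Itm.b q ∈ (x j).1) := h3
          simp [h2', h3']
      have hd : ∀ j, Itm.dia (L j) ∈ Y.1 := by
        intro j
        rw [hx j _ (.dia _)]
        obtain ⟨p, hp⟩ := (x j).2 (insert (Itm.dia (L j)) F)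
        rw [hp _ (by simp)]
        refine ⟨p.h, p.hH, fun q hq => ?_⟩
        obtain ⟨h1, h2, h3⟩ := (hL j q).1 hq
        rw [h3]
        exact (hp (.b q.1) (by simp [h1])).symm
      obtain ⟨p, hp⟩ := Y.2 (F ∪ Finset.univ.image (fun j => Itm.dia (L j)))
      have hd' : ∀ j, (Itm.dia (L j)).holds p := fun j => (hp _ (by simp)).1 (hd j)
      choose g hg hq using hd'
      obtain ⟨h', hh'⟩ := p.hJ.indep p.m g hg
      by_cases hAg : Nonempty Ag
      · obtain ⟨j0⟩ := hAg
        have hH := p.hJ.choice_hist _ _ _ (hg j0) _ (hh' j0)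
        refine ⟨p.mv p.m h' hH, ?_⟩
        rintro b hb v (⟨hM, rfl⟩ | ⟨j, b', rfl, hS, rfl⟩)
        · rw [hM.inv, hp b (by simp [hb])]
        · have := hq j (b', (Itm.b b' ∈ (x j).1)) ((hL j _).2 ⟨hb, hS, rfl⟩)
          refine Iff.trans ?_ this
          exact hS.inv (p.mv p.m (g j) (hg j)) h' hH (hh' j)
      · refine ⟨p, ?_⟩
        rintro b hb v (⟨hM, rfl⟩ | ⟨j, b', rfl, hS, rfl⟩)
        · rw [hp b (by simp [hb])]
        · exact absurd ⟨j⟩ hAg)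
  refine ⟨Z, fun j => ⟨(hx j).symm.trans fun b hb => (hZ b _ (Or.inl ⟨hb, rfl⟩)).symm,
    fun b hb => (hZ _ _ (Or.inr ⟨j, b, rfl, hb, rfl⟩)).symm⟩⟩

/-- A history through a later moment passes through earlier ones. -/
theorem hist_down {M : PreModel Ag} (hJ : M.IsJStit) {m m1 : M.W} {g : Set M.W}
    (hle : M.le m m1) (hg : M.HistAt m1 g) : M.HistAt m g := by
  refine ⟨hg.1, ?_⟩
  have hc : IsChain M.le (insert m g) := by
    refine hg.1.1.insert fun e he _ => ?_
    by_cases h : e = m1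
    · subst h; exact Or.inl hle
    · rcases hg.1.1 he hg.2 h with h | h
      · exact (hJ.noBackBranch _ _ _ hle h)
      · exact Or.inl (hJ.le_trans _ _ _ hle h)
  have := hg.1.2 hc (Set.subset_insert _ _)
  rw [this]; exact Set.mem_insert _ _

/-- Every point has a semantic step making presented proofs settled. -/
theorem pt_step (p : Pt CS) : ∃ m' h', ∃ _ : p.M.HistAt m' h', p.M.R p.m m' ∧
    p.M.Act p.m p.h ⊆ p.M.ActM m' := by
  by_cases hx : ∃ m1 ∈ p.h, p.M.lt p.m m1
  · obtain ⟨m1, hm1, hlt⟩ := hx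
    refine ⟨m1, p.h, ⟨p.hH.1, hm1⟩, p.hJ.futureMatters _ _ hlt.1, ?_⟩
    intro t ht g hg
    have hgm := hist_down p.hJ hlt.1 hg
    apply p.hJ.expand _ _ _ hlt hg
    rwa [p.hJ.divide p.m g p.h hgm p.hH ⟨m1, hlt, hg.2, hm1⟩]
  · refine ⟨p.m, p.h, p.hH, p.hJ.r_refl _, ?_⟩
    intro t ht g hg
    have : p.h = g := by
      apply p.hH.1.2 hg.1.1
      intro e he
      by_cases h : e = p.m
      · subst h; exact hg.2
      · rcases p.hH.1.1 he p.hH.2 h with h' | h'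
        · exact (hist_down p.hJ h' hg).2
        · exact absurd ⟨e, he, h', fun h2 => h h2.symm⟩ hx
    rwa [← this]

theorem step_ex (X : PP CS) : ∃ Y : PP CS, relK X Y ∧
    ∀ t, Itm.b (.act t) ∈ X.1 → Itm.b (.actM t) ∈ Y.1 := by
  obtain ⟨Y, hY⟩ := compact (CS := CS)
    (fun b v => (IsK b ∧ b ∈ X.1 ∧ v = True) ∨
      (∃ t, b = .b (.actM t) ∧ Itm.b (.act t) ∈ X.1 ∧ v = True)) (by
      intro F
      obtain ⟨p, hp⟩ := X.2 (F ∪ F.image (fun a => match a with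
        | .b (.actM t) => .b (.act t)
        | a => a))
      obtain ⟨m', h', hh, hR, hA⟩ := pt_step p
      refine ⟨p.mv m' h' hh, ?_⟩
      rintro b hb v (⟨hM, hX, rfl⟩ | ⟨t, rfl, ht, rfl⟩)
      · simpa using hM.pres p m' h' hh hR ((hp b (by simp [hb])).1 hX)
      · have := (hp (.b (.act t)) (Finset.mem_union_right _
          (Finset.mem_image.2 ⟨_, hb, rfl⟩))).1 ht
        exact iff_true_intro (hA this))
  refine ⟨Y, fun b hb hX => by simpa using (hY b True (Or.inl ⟨hb, hX, rfl⟩)), ?_⟩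
  intro t ht
  simpa using hY _ True (Or.inr ⟨t, rfl, ht, rfl⟩)

/-- Chains of limit points have upper bounds. -/
theorem chain_ub (X : PP CS) (c : Set (PP CS)) (hX : ∀ Y ∈ c, relK X Y) (hc : IsChain relK c) :
    ∃ Z : PP CS, relK X Z ∧ ∀ Y ∈ c, relK Y Z := by
  rcases c.eq_empty_or_nonempty with rfl | ⟨Y0, hY0⟩
  · exact ⟨X, relK.refl X, by simp⟩
  obtain ⟨Z, hZ⟩ := compact (CS := CS)
    (fun b v => IsK b ∧ (∃ Y ∈ c, b ∈ Y.1) ∧ v = True) (by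
      intro F
      have : ∃ Y ∈ c, ∀ a ∈ F, IsK a → (∃ Y ∈ c, a ∈ Y.1) → a ∈ Y.1 := by
        induction F using Finset.induction_on with
        | empty => exact ⟨Y0, hY0, by simp⟩
        | insert a F _ ih =>
          obtain ⟨Y, hY, h⟩ := ih
          by_cases ha : IsK a ∧ ∃ Y ∈ c, a ∈ Y.1
          · obtain ⟨hk, Y', hY', ha'⟩ := ha
            have : relK Y Y' ∨ relK Y' Y := by
              by_cases e : Y = Y'
              · subst e; exact Or.inl (relK.refl _)
              · exact hc hY hY' e
            rcases this with r | r
            · refine ⟨Y', hY', ?_⟩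
              intro b hb hk hb'
              rcases Finset.mem_insert.1 hb with rfl | hb
              · exact ha'
              · exact r b hk (h b hb hk hb')
            · refine ⟨Y, hY, ?_⟩
              intro b hb hk hb'
              rcases Finset.mem_insert.1 hb with rfl | hb
              · exact r b hk ha'
              · exact (h b hb hk hb')
          · refine ⟨Y, hY, ?_⟩
            intro b hb hk hb'
            rcases Finset.mem_insert.1 hb with rfl | hb
            · exact absurd ⟨hk, hb'⟩ ha
            · exact (h b hb hk hb')
      obtain ⟨Y, hY, h⟩ := this
      obtain ⟨p, hp⟩ := Y.2 F
      refine ⟨p, ?_⟩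
      rintro a ha v ⟨hk, hy, rfl⟩
      simpa using (hp a ha).1 (h a ha hk hy))
  have hZ' : ∀ Y ∈ c, relK Y Z := fun Y hY a ha h => by
    simpa using hZ a True ⟨ha, ⟨Y, hY, h⟩, rfl⟩
  exact ⟨Z, (hX Y0 hY0).trans (hZ' Y0 hY0), hZ'⟩

def Final (Z : PP CS) : Prop := ∀ Y, eqM Z Y → ∀ t, Itm.b (.act t) ∈ Y.1 → Itm.b (.actM t) ∈ Z.1

theorem final_ex (X : PP CS) : ∃ Z : PP CS, relK X Z ∧ Final Z ∧
    ∀ t, Itm.b (.act t) ∈ X.1 → Itm.b (.actM t) ∈ Z.1 := by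
  obtain ⟨X1, h1, hA⟩ := step_ex X
  obtain ⟨Z, hZ⟩ := exists_maximal_of_chains_bounded
    (α := {Y : PP CS // relK X1 Y}) (r := fun a b => relK a.1 b.1) (by
      intro c hc
      obtain ⟨Z, hZ, hZ'⟩ := chain_ub X1 (Subtype.val '' c) (by rintro _ ⟨a, _, rfl⟩; exact a.2) (by
        rintro _ ⟨a, ha, rfl⟩ _ ⟨b, hb, rfl⟩ hne
        exact hc ha hb (fun h => hne (by rw [h])))
      exact ⟨⟨Z, hZ⟩, fun a ha => hZ' a.1 ⟨a, ha, rfl⟩⟩) (fun h h' => h.trans h')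
  refine ⟨Z.1, h1.trans Z.2, ?_, fun t ht => Z.2 _ (.kee (.actM t)) (hA t ht)⟩
  intro Y hY t ht
  obtain ⟨Y1, hr, hA'⟩ := step_ex Y
  have hr' : relK Z.1 Y1 := hY.relK.trans hr
  exact hZ ⟨Y1, Z.2.trans hr'⟩ hr' _ (.kee (.actM t)) (hA' t ht)

noncomputable def fin (X : PP CS) : PP CS := (final_ex X).choose
theorem fin_relK (X : PP CS) : relK X (fin X) := (final_ex X).choose_spec.1
theorem fin_final (X : PP CS) : Final (fin X) := (final_ex X).choose_spec.2.1
theorem fin_act (X : PP CS) : ∀ t, Itm.b (.act t) ∈ X.1 → Itm.b (.actM t) ∈ (fin X).1 :=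
  (final_ex X).choose_spec.2.2

noncomputable def sel (Y X : PP CS) : PP CS := if eqM Y X then X else Y
theorem sel_eqM (Y X : PP CS) : eqM Y (sel Y X) := by
  unfold sel; split_ifs with h
  · exact h
  · exact eqM.refl Y
theorem sel_of {Y X : PP CS} (h : eqM Y X) : sel Y X = X := if_pos h

theorem actM_act (X : PP CS) (t : Pol) (h : Itm.b (.actM t) ∈ X.1) : Itm.b (.act t) ∈ X.1 := by
  obtain ⟨p, h1, h2⟩ := loc2 X (.b (.actM t)) (.b (.act t))
  exact h2.2 (h1.1 h p.h p.hH)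

theorem actM_iff (X : PP CS) (t : Pol) :
    Itm.b (.actM t) ∈ X.1 ↔ ∀ Y, eqM X Y → Itm.b (.act t) ∈ Y.1 := by
  constructor
  · intro h Y hY
    exact actM_act Y t ((hY _ (.actM t)).1 h)
  · intro h
    by_contra hn
    obtain ⟨Y, hY, hY'⟩ := M_ex X (.b (.act t)) (.b (.actM t)) hn (by
      intro p hp
      simpa [Itm.holds, BI.holds, ActM, Pt.mv] using hp)
    exact hY' (h Y hY)

theorem actC_iff (X : PP CS) (j : Ag) (t : Pol) :
    Itm.b (.actC j t) ∈ X.1 ↔ ∀ Y, eqS j X Y → Itm.b (.act t) ∈ Y.1 := by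
  constructor
  · intro h Y hY
    have h' := (hY.2 _ (.actC t)).1 h
    obtain ⟨p, h1, h2⟩ := loc2 Y (.b (.actC j t)) (.b (.act t))
    exact h2.2 (h1.1 h' p.h (p.hJ.choice_self _ _ _ p.hH))
  · intro h
    by_contra hn
    obtain ⟨Y, hY, hY'⟩ := S_ex j X (.b (.act t)) (.b (.actC j t)) hn (by
      intro p hp
      have : ∃ g ∈ p.M.Choice p.m j p.h, t ∉ p.M.Act p.m g := by
        simpa [Itm.holds, BI.holds, ActC] using hp
      obtain ⟨g, hg, hg'⟩ := this
      exact ⟨g, hg, fun _ => hg'⟩)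
    exact hY' (h Y hY)

theorem box_iff (X : PP CS) (A : Form Ag) :
    Itm.b (.f (.box A)) ∈ X.1 ↔ ∀ Y, eqM X Y → Itm.b (.f A) ∈ Y.1 := by
  constructor
  · intro h Y hY
    have h' := (hY _ (.box A)).1 h
    obtain ⟨p, h1, h2⟩ := loc2 Y (.b (.f (.box A))) (.b (.f A))
    exact h2.2 (h1.1 h' p.h p.hH)
  · intro h
    by_contra hn
    obtain ⟨Y, hY, hY'⟩ := M_ex X (.b (.f A)) (.b (.f (.box A))) hn (by
      intro p hp
      simpa [Itm.holds, BI.holds, Sat, Pt.mv] using hp)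
    exact hY' (h Y hY)

theorem stit_iff (X : PP CS) (j : Ag) (A : Form Ag) :
    Itm.b (.f (.stit j A)) ∈ X.1 ↔ ∀ Y, eqS j X Y → Itm.b (.f A) ∈ Y.1 := by
  constructor
  · intro h Y hY
    have h' := (hY.2 _ (.stit A)).1 h
    obtain ⟨p, h1, h2⟩ := loc2 Y (.b (.f (.stit j A))) (.b (.f A))
    exact h2.2 (h1.1 h' p.h (p.hJ.choice_self _ _ _ p.hH))
  · intro h
    by_contra hn
    obtain ⟨Y, hY, hY'⟩ := S_ex j X (.b (.f A)) (.b (.f (.stit j A))) hn (by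
      intro p hp
      have : ∃ g ∈ p.M.Choice p.m j p.h, ¬ p.M.Sat A p.m g := by
        simpa [Itm.holds, BI.holds, Sat] using hp
      obtain ⟨g, hg, hg'⟩ := this
      exact ⟨g, hg, fun _ => hg'⟩)
    exact hY' (h Y hY)

theorem know_iff (X : PP CS) (A : Form Ag) :
    Itm.b (.f (.know A)) ∈ X.1 ↔ ∀ Y, relK X Y → Itm.b (.f A) ∈ Y.1 := by
  constructor
  · intro h Y hY
    have h' := hY _ (.know A) h
    obtain ⟨p, h1, h2⟩ := loc2 Y (.b (.f (.know A))) (.b (.f A))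
    exact h2.2 (h1.1 h' p.m p.h (p.hJ.r_refl _) p.hH)
  · intro h
    by_contra hn
    obtain ⟨Y, hY, hY'⟩ := K_ex X (.b (.f A)) (.b (.f (.know A))) hn (by
      intro p hp
      have : ∃ m' h', p.M.R p.m m' ∧ p.M.HistAt m' h' ∧ ¬ p.M.Sat A m' h' := by
        simpa [Itm.holds, BI.holds, Sat] using hp
      obtain ⟨m', h', a, b, c⟩ := this
      exact ⟨m', h', b, a, c⟩)
    exact hY' (h Y hY)

theorem ke_iff (X : PP CS) (A : Form Ag) :
    Itm.b (.ke A) ∈ X.1 ↔ ∀ Y, relKe X Y → Itm.b (.f A) ∈ Y.1 := by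
  constructor
  · intro h Y hY
    have h' := hY _ (.ke A) h
    obtain ⟨p, h1, h2⟩ := loc2 Y (.b (.ke A)) (.b (.f A))
    exact h2.2 (h1.1 h' p.m p.h (p.hJ.re_refl _) p.hH)
  · intro h
    by_contra hn
    obtain ⟨Y, hY, hY'⟩ := Ke_ex X (.b (.f A)) (.b (.ke A)) hn (by
      intro p hp
      have : ∃ m' h', p.M.Re p.m m' ∧ p.M.HistAt m' h' ∧ ¬ p.M.Sat A m' h' := by
        simpa [Itm.holds, BI.holds] using hp
      obtain ⟨m', h', a, b, c⟩ := this
      exact ⟨m', h', b, a, c⟩)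
    exact hY' (h Y hY)

theorem and_iff (X : PP CS) (A B : Form Ag) :
    Itm.b (.f (.and A B)) ∈ X.1 ↔ Itm.b (.f A) ∈ X.1 ∧ Itm.b (.f B) ∈ X.1 := by
  obtain ⟨p, h1, h2, h3⟩ := loc3 X (.b (.f (.and A B))) (.b (.f A)) (.b (.f B))
  rw [h1, h2, h3]; exact Iff.rfl

theorem neg_iff (X : PP CS) (A : Form Ag) :
    Itm.b (.f (.neg A)) ∈ X.1 ↔ Itm.b (.f A) ∉ X.1 := by
  obtain ⟨p, h1, h2⟩ := loc2 X (.b (.f (.neg A))) (.b (.f A))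
  rw [h1, h2]; exact Iff.rfl

theorem pf_iff (X : PP CS) (t : Pol) (A : Form Ag) :
    Itm.b (.f (.pf t A)) ∈ X.1 ↔ Itm.b (.ev t A) ∈ X.1 ∧ Itm.b (.ke A) ∈ X.1 := by
  obtain ⟨p, h1, h2, h3⟩ := loc3 X (.b (.f (.pf t A))) (.b (.ev t A)) (.b (.ke A))
  rw [h1, h2, h3]; exact Iff.rfl

theorem proven_iff (X : PP CS) (t : Pol) (A : Form Ag) :
    Itm.b (.f (.proven t A)) ∈ X.1 ↔ Itm.b (.actM t) ∈ X.1 ∧ Itm.b (.f (.pf t A)) ∈ X.1 := by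
  obtain ⟨p, h1, h2, h3⟩ := loc3 X (.b (.f (.proven t A))) (.b (.actM t)) (.b (.f (.pf t A)))
  rw [h1, h2, h3]; exact Iff.rfl

theorem prove_iff (X : PP CS) (j : Ag) (t : Pol) (A : Form Ag) :
    Itm.b (.f (.prove j t A)) ∈ X.1 ↔ Itm.b (.actC j t) ∈ X.1 ∧ Itm.b (.f (.pf t A)) ∈ X.1 ∧
      Itm.b (.actM t) ∉ X.1 := by
  obtain ⟨p, hp⟩ := X.2 {.b (.f (.prove j t A)), .b (.actC j t), .b (.f (.pf t A)), .b (.actM t)}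
  rw [hp _ (by simp), hp _ (by simp), hp _ (by simp), hp _ (by simp)]; exact Iff.rfl

theorem ev_app (X : PP CS) (s t : Pol) (A B : Form Ag) (h : Itm.b (.ev s (A.imp B)) ∈ X.1)
    (h' : Itm.b (.ev t A) ∈ X.1) : Itm.b (.ev (.app s t) B) ∈ X.1 := by
  obtain ⟨p, h1, h2, h3⟩ := loc3 X (.b (.ev s (A.imp B))) (.b (.ev t A)) (.b (.ev (.app s t) B))
  exact h3.2 (p.hJ.evApp _ _ _ _ _ (h1.1 h) (h2.1 h'))

theorem ev_sum1 (X : PP CS) (s t : Pol) (A : Form Ag) (h : Itm.b (.ev s A) ∈ X.1) :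
    Itm.b (.ev (.sum s t) A) ∈ X.1 := by
  obtain ⟨p, h1, h2⟩ := loc2 X (.b (.ev s A)) (.b (.ev (.sum s t) A))
  exact h2.2 (p.hJ.evSum _ _ _ (Or.inl (h1.1 h)))

theorem ev_sum2 (X : PP CS) (s t : Pol) (A : Form Ag) (h : Itm.b (.ev t A) ∈ X.1) :
    Itm.b (.ev (.sum s t) A) ∈ X.1 := by
  obtain ⟨p, h1, h2⟩ := loc2 X (.b (.ev t A)) (.b (.ev (.sum s t) A))
  exact h2.2 (p.hJ.evSum _ _ _ (Or.inr (h1.1 h)))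

theorem ev_bang (X : PP CS) (t : Pol) (A : Form Ag) (h : Itm.b (.ev t A) ∈ X.1) :
    Itm.b (.ev (.bang t) (.pf t A)) ∈ X.1 := by
  obtain ⟨p, h1, h2⟩ := loc2 X (.b (.ev t A)) (.b (.ev (.bang t) (.pf t A)))
  exact h2.2 (p.hJ.evBang _ _ _ (h1.1 h))

theorem ev_cs (X : PP CS) (c : ℕ) (A : Form Ag) (h : Form.pf (.pconst c) A ∈ CS) :
    Itm.b (.ev (.pconst c) A) ∈ X.1 := by
  obtain ⟨p, h1⟩ := loc1 X (.b (.ev (.pconst c) A))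
  exact h1.2 (p.hN c p.m A h)


/-- Moments of the canonical tree: a time and a function restricted to earlier times. -/
structure Wd (d : PP CS) : Type where
  k : ℚ≥0
  s : ℚ≥0 → PP CS
  hs : ∀ i, k ≤ i → s i = d

section canon

variable {d : PP CS}

def wle (a b : Wd d) : Prop := a.k ≤ b.k ∧ ∀ i < a.k, a.s i = b.s i

theorem wext {a b : Wd d} (hk : a.k = b.k) (h : ∀ i < a.k, a.s i = b.s i) : a = b := by
  have : a.s = b.s := by
    funext i
    by_cases hi : i < a.k
    · exact h i hi
    · rw [a.hs i (not_lt.1 hi), b.hs i (hk ▸ not_lt.1 hi)]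
  cases a; cases b; simp_all

noncomputable def mom (d : PP CS) (σ : ℚ≥0 → PP CS) (k : ℚ≥0) : Wd d :=
  ⟨k, fun i => if i < k then σ i else d, fun i hi => if_neg (not_lt.2 hi)⟩

theorem mom_s {σ : ℚ≥0 → PP CS} {k i : ℚ≥0} (h : i < k) : (mom d σ k).s i = σ i := if_pos h

def hist (d : PP CS) (σ : ℚ≥0 → PP CS) : Set (Wd d) := {m | ∀ i < m.k, m.s i = σ i}

theorem mom_mem (σ : ℚ≥0 → PP CS) (k : ℚ≥0) : mom d σ k ∈ hist d σ := fun _ hi => mom_s hi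

theorem hist_inj {σ τ : ℚ≥0 → PP CS} (h : hist d σ = hist d τ) : σ = τ := by
  funext i
  have h1 : mom d σ (i + 1) ∈ hist d τ := h ▸ mom_mem σ (i + 1)
  have hi : i < i + 1 := lt_add_one i
  rw [← h1 i hi, mom_s hi]

theorem hist_chain (σ : ℚ≥0 → PP CS) : IsChain wle (hist d σ) := by
  intro a ha b hb _
  rcases le_total a.k b.k with h | h
  · exact Or.inl ⟨h, fun i hi => (ha i hi).trans (hb i (hi.trans_le h)).symm⟩
  · exact Or.inr ⟨h, fun i hi => (hb i hi).trans (ha i (hi.trans_le h)).symm⟩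

theorem hist_max (σ : ℚ≥0 → PP CS) : IsMaxChain wle (hist d σ) := by
  refine ⟨hist_chain σ, fun c hc hsub => ?_⟩
  refine Set.Subset.antisymm hsub fun m hm i hi => ?_
  have h1 : mom d σ (m.k + 1) ∈ c := hsub (mom_mem _ _)
  have hlt : m.k < m.k + 1 := lt_add_one _
  have hne : m ≠ mom d σ (m.k + 1) := fun h => by
    have := congrArg Wd.k h
    exact absurd this (ne_of_lt hlt)
  rcases hc hm h1 hne with h | h
  · rw [h.2 i hi, mom_s (hi.trans hlt)]
  · exact absurd h.1 (not_le.2 hlt)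

theorem max_hist {h : Set (Wd d)} (hh : IsMaxChain wle h) : ∃ σ, h = hist d σ := by
  refine ⟨fun i => if H : ∃ m ∈ h, i < m.k then H.choose.s i else d, ?_⟩
  refine hh.2 (hist_chain _) ?_
  intro m hm i hi
  have H : ∃ m ∈ h, i < m.k := ⟨m, hm, hi⟩
  show m.s i = dite _ _ _
  rw [dif_pos H]
  obtain ⟨h1, h2⟩ := H.choose_spec
  by_cases e : m = H.choose
  · rw [← e]
  · rcases hh.1 hm h1 e with r | r
    · exact r.2 i hi
    · exact (r.2 i h2).symm

noncomputable def fn (h : Set (Wd d)) : ℚ≥0 → PP CS :=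
  if H : ∃ σ, h = hist d σ then H.choose else fun _ => d

theorem fn_hist (σ : ℚ≥0 → PP CS) : fn (hist d σ) = σ := by
  have H : ∃ τ, hist d σ = hist d τ := ⟨σ, rfl⟩
  unfold fn
  rw [dif_pos H]
  exact (hist_inj H.choose_spec).symm

theorem hist_fn {h : Set (Wd d)} (hh : IsMaxChain wle h) : hist d (fn h) = h := by
  obtain ⟨σ, rfl⟩ := max_hist hh
  rw [fn_hist]

theorem mem_fn {h : Set (Wd d)} (hh : IsMaxChain wle h) {m : Wd d} (hm : m ∈ h) {i : ℚ≥0}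
    (hi : i < m.k) : m.s i = fn h i := by
  rw [← hist_fn hh] at hm
  exact hm i hi

/-- The label of a moment. -/
noncomputable def lab (m : Wd d) : PP CS :=
  if m.k ≤ 1 then m.s 0 else fin (sel (m.s 0) (m.s 1))

noncomputable def pt (m : Wd d) (h : Set (Wd d)) : PP CS :=
  if m.k < 1 then lab m else sel (lab m) (fn h m.k)

theorem pt_eqM (m : Wd d) (h : Set (Wd d)) : eqM (lab m) (pt m h) := by
  unfold pt; split_ifs
  · exact eqM.refl _
  · exact sel_eqM _ _

noncomputable def cAct (m : Wd d) (h : Set (Wd d)) : Set Pol :=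
  if m.k = 0 then ∅ else if m.k < 1 then {t | Itm.b (.actM t) ∈ (lab m).1}
  else {t | Itm.b (.act t) ∈ (pt m h).1}

/-- The canonical model. -/
noncomputable def can (d : PP CS) : PreModel Ag where
  W := Wd d
  le := wle
  Choice := fun m j h => {g | (IsMaxChain wle g ∧ m ∈ g) ∧ eqS j (pt m h) (pt m g)}
  Act := cAct
  R := fun m m' => m.k = 0 ∨ (m.k ≠ 0 ∧ m'.k ≠ 0 ∧ (m'.k < 1 → m.k < 1) ∧ relK (lab m) (lab m'))
  Re := fun m m' => m.k = 0 ∨ (m.k ≠ 0 ∧ m'.k ≠ 0 ∧ (m'.k < 1 → m.k < 1) ∧ relKe (lab m) (lab m'))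
  E := fun m t => {A | (m.k = 0 ∧ ∀ X : PP CS, Itm.b (.ev t A) ∈ X.1) ∨
    (m.k ≠ 0 ∧ Itm.b (.ev t A) ∈ (lab m).1)}
  V := fun n m h => Itm.b (.f (.var n)) ∈ (pt m h).1

theorem histAt_iff {m : Wd d} {h : Set (Wd d)} :
    (can d).HistAt m h ↔ IsMaxChain wle h ∧ m ∈ h := Iff.rfl

theorem histAt_self (m : Wd d) : (can d).HistAt m (hist d m.s) :=
  ⟨hist_max _, fun _ _ => rfl⟩

/-- Each point in the class of the label is realised by a history. -/
theorem realise (m : Wd d) (hk : 1 ≤ m.k) (Y : PP CS) (hY : eqM (lab m) Y) :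
    ∃ h, (can d).HistAt m h ∧ pt m h = Y := by
  refine ⟨hist d (Function.update m.s m.k Y), ⟨hist_max _, fun i hi => ?_⟩, ?_⟩
  · rw [Function.update_of_ne hi.ne]
  · unfold pt
    rw [if_neg (not_lt.2 hk), fn_hist, Function.update_self, sel_of hY]

theorem root_real (Y : PP CS) : ∃ (m : Wd d) (h : Set (Wd d)), (can d).HistAt m h ∧ m.k = 1 ∧
    lab m = Y ∧ pt m h = Y := by
  have hl : lab (mom d (fun _ => Y) 1) = Y := by
    have : (mom d (fun _ => Y) 1).k ≤ 1 := le_refl _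
    unfold lab
    rw [if_pos this, mom_s one_pos]
  obtain ⟨h, hh, hp⟩ := realise (mom d (fun _ => Y) 1) (le_refl _) Y (by rw [hl]; exact eqM.refl _)
  exact ⟨_, h, hh, rfl, hl, hp⟩

theorem le_lab {a b : Wd d} (h : wle a b) (ha : a.k ≠ 0) : relK (lab a) (lab b) := by
  have h0 : a.s 0 = b.s 0 := h.2 0 (pos_iff_ne_zero.2 ha)
  unfold lab
  by_cases hb : b.k ≤ 1
  · rw [if_pos hb, if_pos (h.1.trans hb), h0]; exact relK.refl _
  · rw [if_neg hb]
    by_cases ha1 : a.k ≤ 1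
    · rw [if_pos ha1, h0]
      exact (sel_eqM _ _).relK.trans (fin_relK _)
    · rw [if_neg ha1, h0, h.2 1 (not_le.1 ha1)]; exact relK.refl _

theorem actM_can (m : Wd d) (t : Pol) :
    t ∈ (can d).ActM m ↔ m.k ≠ 0 ∧ Itm.b (.actM t) ∈ (lab m).1 := by
  constructor
  · intro h
    have h1 : t ∈ cAct m (hist d m.s) := h _ (histAt_self m)
    have hk : m.k ≠ 0 := by
      intro hk
      unfold cAct at h1
      rw [if_pos hk] at h1
      exact h1
    refine ⟨hk, ?_⟩
    by_cases h2 : m.k < 1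
    · unfold cAct at h1
      rw [if_neg hk, if_pos h2] at h1
      exact h1
    · rw [actM_iff]
      intro Y hY
      obtain ⟨g, hg, rfl⟩ := realise m (not_lt.1 h2) Y hY
      have h3 : t ∈ cAct m g := h g hg
      unfold cAct at h3
      rw [if_neg hk, if_neg h2] at h3
      exact h3
  · rintro ⟨hk, h⟩ g hg
    show t ∈ cAct m g
    unfold cAct
    rw [if_neg hk]
    split_ifs with h2
    · exact h
    · exact (actM_iff _ _).1 h _ (pt_eqM _ _)

theorem actM_sub (m : Wd d) (t : Pol) (h : Set (Wd d)) (hk : m.k ≠ 0)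
    (ht : Itm.b (.actM t) ∈ (lab m).1) : t ∈ cAct m h := by
  unfold cAct
  rw [if_neg hk]
  split_ifs with h2
  · exact ht
  · exact (actM_iff _ _).1 ht _ (pt_eqM _ _)

theorem lt_k {a b : Wd d} (h : (can d).lt a b) : a.k < b.k := by
  refine lt_of_le_of_ne h.1.1 fun e => h.2 (wext e h.1.2)

theorem undiv_pt {m : Wd d} {h g : Set (Wd d)} (hh : (can d).HistAt m h) (hg : (can d).HistAt m g)
    (hu : (can d).Undiv m h g) : pt m h = pt m g := by
  obtain ⟨m', hlt, h1, h2⟩ := hu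
  unfold pt
  rw [← mem_fn hh.1 h1 (lt_k hlt), ← mem_fn hg.1 h2 (lt_k hlt)]

theorem can_expand (m' m : Wd d) (h : Set (Wd d)) (hlt : (can d).lt m' m)
    (hh : (can d).HistAt m h) : cAct m' h ⊆ cAct m h := by
  intro t ht
  have hk := lt_k hlt
  have hk0 : m.k ≠ 0 := (lt_of_le_of_lt (zero_le) hk).ne'
  apply actM_sub m t h hk0
  unfold cAct at ht
  split_ifs at ht with h0 h1
  · exact absurd ht (Set.notMem_empty _)
  · exact le_lab hlt.1 h0 _ (.kee (.actM t)) ht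
  · have ht' : Itm.b (.act t) ∈ (pt m' h).1 := ht
    have hm1 : ¬ m.k ≤ 1 := not_le.2 (lt_of_le_of_lt (not_lt.1 h1) hk)
    have hl : lab m = fin (sel (m.s 0) (m.s 1)) := if_neg hm1
    by_cases h2 : m'.k ≤ 1
    · have e : m'.k = 1 := le_antisymm h2 (not_lt.1 h1)
      have hl' : lab m' = m'.s 0 := if_pos h2
      have hp : pt m' h = sel (m.s 0) (m.s 1) := by
        unfold pt
        rw [if_neg h1, hl', hlt.1.2 0 (pos_iff_ne_zero.2 h0), e, ← mem_fn hh.1 hh.2 (not_le.1 hm1)]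
      rw [hl, ← hp]
      exact fin_act _ t ht'
    · have hl' : lab m' = lab m := by
        rw [hl, ← hlt.1.2 0 (pos_iff_ne_zero.2 h0), ← hlt.1.2 1 (not_le.1 h2)]
        exact if_neg h2
      have hf : Final (lab m') := by rw [hl', hl]; exact fin_final _
      rw [← hl']
      exact hf _ (pt_eqM _ _) t ht'

theorem can_noNew (m : Wd d) (t : Pol) (ht : t ∈ (can d).ActM m) :
    ∃ m' h, (can d).lt m' m ∧ (can d).HistAt m h ∧ t ∈ cAct m' h := by
  obtain ⟨hk, ht⟩ := (actM_can m t).1 ht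
  have key : ∃ k, 0 < k ∧ k < m.k ∧ (1 < m.k → 1 < k) := by
    by_cases h1 : 1 < m.k
    · obtain ⟨k, a, b⟩ := exists_between h1
      exact ⟨k, one_pos.trans a, b, fun _ => a⟩
    · obtain ⟨k, a, b⟩ := exists_between (pos_iff_ne_zero.2 hk)
      exact ⟨k, a, b, fun h => absurd h h1⟩
  obtain ⟨k, k0, k1, k2⟩ := key
  have hl : lab (mom d m.s k) = lab m := by
    unfold lab
    rw [mom_s k0]
    by_cases h1 : m.k ≤ 1
    · rw [if_pos h1, if_pos (show (mom d m.s k).k ≤ 1 from k1.le.trans h1)]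
    · have := k2 (not_le.1 h1)
      rw [if_neg h1, if_neg (show ¬ (mom d m.s k).k ≤ 1 from not_le.2 this), mom_s this]
  refine ⟨mom d m.s k, hist d m.s, ⟨⟨k1.le, fun i hi => mom_s hi⟩, fun e => ?_⟩, histAt_self m, ?_⟩
  · have := congrArg Wd.k e
    exact absurd this k1.ne
  · exact actM_sub _ t _ k0.ne' (by rw [hl]; exact ht)

theorem can_le_R (m m' : Wd d) (h : wle m m') : (can d).R m m' := by
  by_cases h0 : m.k = 0
  · exact Or.inl h0
  · refine Or.inr ⟨h0, ?_, fun h1 => h.1.trans_lt h1, le_lab h h0⟩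
    exact ((pos_iff_ne_zero.2 h0).trans_le h.1).ne'

theorem can_R_Re (m m' : Wd d) (h : (can d).R m m') : (can d).Re m m' := by
  rcases h with h | ⟨a, b, c, e⟩
  · exact Or.inl h
  · exact Or.inr ⟨a, b, c, e.relKe⟩

theorem wle_refl (m : Wd d) : wle m m := ⟨le_refl _, fun _ _ => rfl⟩

theorem can_jstit (d : PP CS) : (can d).IsJStit where
  nonempty := ⟨mom d (fun _ => d) 0⟩
  le_refl := wle_refl
  le_trans := fun a b c h h' =>
    ⟨h.1.trans h'.1, fun i hi => (h.2 i hi).trans (h'.2 i (hi.trans_le h.1))⟩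
  le_antisymm := fun a b h h' => wext (le_antisymm h.1 h'.1) h.2
  histConn := fun m m1 => ⟨mom d (fun _ => d) 0, ⟨zero_le, fun i hi => absurd hi (not_lt.2 (zero_le))⟩,
    ⟨zero_le, fun i hi => absurd hi (not_lt.2 (zero_le))⟩⟩
  noBackBranch := by
    intro m m1 m2 h1 h2
    rcases le_total m1.k m2.k with h | h
    · exact Or.inl ⟨h, fun i hi => (h1.2 i hi).trans (h2.2 i (hi.trans_le h)).symm⟩
    · exact Or.inr ⟨h, fun i hi => (h2.2 i hi).trans (h1.2 i (hi.trans_le h)).symm⟩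
  choice_self := fun m j h hh => ⟨hh, eqS.refl _ _⟩
  choice_hist := fun m j h _ g hg => hg.1
  choice_cells := by
    intro m j h hh g hg
    ext g'
    exact ⟨fun h' => ⟨h'.1, hg.2.trans h'.2⟩, fun h' => ⟨h'.1, hg.2.symm.trans h'.2⟩⟩
  noChoiceUndiv := by
    intro m j h g hh hg hu
    have := undiv_pt hh hg hu
    show {g' | _ ∧ eqS j (pt m h) (pt m g')} = {g' | _ ∧ eqS j (pt m g) (pt m g')}
    rw [this]
  indep := by
    intro m f hf
    by_cases hk : m.k < 1
    · refine ⟨hist d m.s, fun j => ⟨histAt_self m, ?_⟩⟩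
      unfold pt
      rw [if_pos hk, if_pos hk]
      exact eqS.refl _ _
    · obtain ⟨Z, hZ⟩ := indepPP (lab m) (fun j => pt m (f j)) (fun j => pt_eqM _ _)
      by_cases hAg : Nonempty Ag
      · obtain ⟨j0⟩ := hAg
        obtain ⟨h, hh, rfl⟩ := realise m (not_lt.1 hk) Z ((pt_eqM _ _).trans (hZ j0).1)
        exact ⟨h, fun j => ⟨hh, hZ j⟩⟩
      · exact ⟨hist d m.s, fun j => absurd ⟨j⟩ hAg⟩
  r_refl := fun m => can_le_R m m (wle_refl m)
  r_trans := by
    rintro m1 m2 m3 (h | ⟨a, b, c, e⟩) h'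
    · exact Or.inl h
    · rcases h' with h' | ⟨a', b', c', e'⟩
      · exact absurd h' b
      · exact Or.inr ⟨a, b', fun h => c (c' h), e.trans e'⟩
  re_refl := fun m => can_R_Re _ _ (can_le_R m m (wle_refl m))
  re_trans := by
    rintro m1 m2 m3 (h | ⟨a, b, c, e⟩) h'
    · exact Or.inl h
    · rcases h' with h' | ⟨a', b', c', e'⟩
      · exact absurd h' b
      · exact Or.inr ⟨a, b', fun h => c (c' h), e.trans e'⟩
  r_sub_re := can_R_Re
  monoEv := by
    rintro t m m' hR A (⟨h0, hA⟩ | ⟨h0, hA⟩)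
    · by_cases h1 : m'.k = 0
      · exact Or.inl ⟨h1, hA⟩
      · exact Or.inr ⟨h1, hA _⟩
    · rcases hR with h | ⟨a, b, c, e⟩
      · exact absurd h h0
      · exact Or.inr ⟨b, e _ (.ev t A) hA⟩
  evApp := by
    rintro m s t A B (⟨h0, h⟩ | ⟨h0, h⟩) (⟨h0', h'⟩ | ⟨h0', h'⟩)
    · exact Or.inl ⟨h0, fun X => ev_app X s t A B (h X) (h' X)⟩
    · exact absurd h0 h0'
    · exact absurd h0' h0
    · exact Or.inr ⟨h0, ev_app _ s t A B h h'⟩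
  evSum := by
    rintro m s t A ((⟨h0, h⟩ | ⟨h0, h⟩) | (⟨h0, h⟩ | ⟨h0, h⟩))
    · exact Or.inl ⟨h0, fun X => ev_sum1 X s t A (h X)⟩
    · exact Or.inr ⟨h0, ev_sum1 _ s t A h⟩
    · exact Or.inl ⟨h0, fun X => ev_sum2 X s t A (h X)⟩
    · exact Or.inr ⟨h0, ev_sum2 _ s t A h⟩
  evBang := by
    rintro m t A (⟨h0, h⟩ | ⟨h0, h⟩)
    · exact Or.inl ⟨h0, fun X => ev_bang X t A (h X)⟩
    · exact Or.inr ⟨h0, ev_bang _ t A h⟩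
  expand := can_expand
  noNew := can_noNew
  divide := by
    intro m h g hh hg hu
    have := undiv_pt hh hg hu
    show cAct m h = cAct m g
    unfold cAct
    rw [this]
  futureMatters := can_le_R
  transparency := by
    intro m m' hR t ht
    replace ht := (actM_can (d := d) m t).1 ht
    refine (actM_can (d := d) m' t).2 ?_
    rcases hR with h | ⟨a, b, c, e⟩
    · exact absurd h ht.1
    · exact ⟨b, e _ (.actM t) ht.2⟩

theorem can_normal (d : PP CS) : (can d).CSNormal CS := by
  intro c m A hA
  by_cases h : m.k = 0
  · exact Or.inl ⟨h, fun X => ev_cs X c A hA⟩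
  · exact Or.inr ⟨h, ev_cs _ c A hA⟩

theorem pf_aux (t : Pol) (A : Form Ag)
    (ih : ∀ (m : Wd d) h, 1 ≤ m.k → (can d).HistAt m h →
      ((can d).Sat A m h ↔ Itm.b (.f A) ∈ (pt m h).1))
    (m : Wd d) (h : Set (Wd d)) (hk : 1 ≤ m.k) :
    (A ∈ (can d).E m t ∧ ∀ m' h', (can d).Re m m' → (can d).HistAt m' h' → (can d).Sat A m' h') ↔
      Itm.b (.f (.pf t A)) ∈ (pt m h).1 := by
  have hk0 : m.k ≠ 0 := (one_pos.trans_le hk).ne'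
  rw [pf_iff, ← pt_eqM m h _ (.ev t A), ← pt_eqM m h _ (.ke A), ke_iff]
  constructor
  · rintro ⟨h1, h2⟩
    refine ⟨?_, ?_⟩
    · rcases h1 with ⟨h0, _⟩ | ⟨_, h1⟩
      · exact absurd h0 hk0
      · exact h1
    · intro Y hY
      obtain ⟨m', h', hh, hk', hl, rfl⟩ := root_real (d := d) Y
      rw [← ih m' h' hk'.ge hh]
      refine h2 m' h' (Or.inr ⟨hk0, ?_, ?_, ?_⟩) hh
      · rw [hk']; exact one_ne_zero
      · rw [hk']; exact fun h => absurd h (lt_irrefl _)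
      · rw [hl]; exact hY
  · rintro ⟨h1, h2⟩
    refine ⟨Or.inr ⟨hk0, h1⟩, ?_⟩
    rintro m' h' (h | ⟨_, b, c, e⟩) hh
    · exact absurd h hk0
    · have hk' : 1 ≤ m'.k := by
        by_contra hn
        exact absurd (c (not_le.1 hn)) (not_lt.2 hk)
      rw [ih m' h' hk' hh]
      exact h2 _ (e.trans (pt_eqM m' h').relK.relKe)

theorem truth (A : Form Ag) : ∀ (m : Wd d) (h : Set (Wd d)), 1 ≤ m.k → (can d).HistAt m h →
    ((can d).Sat A m h ↔ Itm.b (.f A) ∈ (pt m h).1) := by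
  induction A with
  | var n => intro m h _ _; exact Iff.rfl
  | and A B ihA ihB =>
    intro m h hk hh
    rw [and_iff, ← ihA m h hk hh, ← ihB m h hk hh]; exact Iff.rfl
  | neg A ih =>
    intro m h hk hh
    rw [neg_iff, ← ih m h hk hh]; exact Iff.rfl
  | stit j A ih =>
    intro m h hk hh
    rw [stit_iff]
    constructor
    · intro hS Y hY
      obtain ⟨g, hg, rfl⟩ := realise m hk Y ((pt_eqM m h).trans hY.1)
      exact (ih m g hk hg).1 (hS g ⟨hg, hY⟩)
    · intro hS g hg
      exact (ih m g hk hg.1).2 (hS _ hg.2)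
  | box A ih =>
    intro m h hk hh
    rw [box_iff]
    constructor
    · intro hS Y hY
      obtain ⟨g, hg, rfl⟩ := realise m hk Y ((pt_eqM m h).trans hY)
      exact (ih m g hk hg).1 (hS g hg)
    · intro hS g hg
      exact (ih m g hk hg).2 (hS _ ((pt_eqM m h).symm.trans (pt_eqM m g)))
  | pf t A ih =>
    intro m h hk hh
    exact pf_aux t A ih m h hk
  | know A ih =>
    intro m h hk hh
    have hk0 : m.k ≠ 0 := (one_pos.trans_le hk).ne'
    rw [← pt_eqM m h _ (.know A), know_iff]
    constructor
    · intro h2 Y hY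
      obtain ⟨m', h', hh, hk', hl, rfl⟩ := root_real (d := d) Y
      rw [← ih m' h' hk'.ge hh]
      refine h2 m' h' (Or.inr ⟨hk0, ?_, ?_, ?_⟩) hh
      · rw [hk']; exact one_ne_zero
      · rw [hk']; exact fun h => absurd h (lt_irrefl _)
      · rw [hl]; exact hY
    · intro h2
      rintro m' h' (h | ⟨_, b, c, e⟩) hh
      · exact absurd h hk0
      · have hk' : 1 ≤ m'.k := by
          by_contra hn
          exact absurd (c (not_le.1 hn)) (not_lt.2 hk)
        rw [ih m' h' hk' hh]
        exact h2 _ (e.trans (pt_eqM m' h').relK)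
  | prove j t A ih =>
    intro m h hk hh
    have hk0 : m.k ≠ 0 := (one_pos.trans_le hk).ne'
    rw [prove_iff, ← pf_aux t A ih m h hk, ← pt_eqM m h _ (.actM t), actC_iff]
    have e1 : t ∈ (can d).ActC m h j ↔ ∀ Y, eqS j (pt m h) Y → Itm.b (.act t) ∈ Y.1 := by
      have hA : ∀ g, t ∈ cAct m g ↔ Itm.b (.act t) ∈ (pt m g).1 := by
        intro g
        unfold cAct
        rw [if_neg hk0, if_neg (not_lt.2 hk)]; exact Iff.rfl
      constructor
      · intro hS Y hY
        obtain ⟨g, hg, rfl⟩ := realise m hk Y ((pt_eqM m h).trans hY.1)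
        exact (hA g).1 (hS g ⟨hg, hY⟩)
      · intro hS g hg
        exact (hA g).2 (hS _ hg.2)
    have e2 : t ∈ (can d).ActM m ↔ Itm.b (.actM t) ∈ (lab m).1 := by
      rw [actM_can]; exact and_iff_right hk0
    rw [← e1, ← e2]; exact Iff.rfl
  | proven t A ih =>
    intro m h hk hh
    have hk0 : m.k ≠ 0 := (one_pos.trans_le hk).ne'
    have e2 : t ∈ (can d).ActM m ↔ Itm.b (.actM t) ∈ (lab m).1 := by
      rw [actM_can]; exact and_iff_right hk0
    rw [proven_iff, ← pf_aux t A ih m h hk, ← pt_eqM m h _ (.actM t), ← e2]; exact Iff.rfl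

end canon

end JComp

/-- Compactness: Γ is satisfiable in a CS-normal jstit model iff
every finite subset of Γ is. -/
theorem compactness {Ag : Type} [Fintype Ag] [Nonempty Ag]
    (CS : Set (Form Ag)) (hCS : IsConstSpec CS) (Γ : Set (Form Ag)) :
    (∃ (M : PreModel Ag) (m : M.W) (h : Set M.W),
        M.IsJStit ∧ M.CSNormal CS ∧ M.HistAt m h ∧ ∀ A ∈ Γ, M.Sat A m h) ↔
    (∀ Γ₀ : Finset (Form Ag), ↑Γ₀ ⊆ Γ →
      ∃ (M : PreModel Ag) (m : M.W) (h : Set M.W),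
        M.IsJStit ∧ M.CSNormal CS ∧ M.HistAt m h ∧ ∀ A ∈ Γ₀, M.Sat A m h) := by
  constructor
  · rintro ⟨M, m, h, hJ, hN, hH, hS⟩ Γ₀ hΓ
    exact ⟨M, m, h, hJ, hN, hH, fun A hA => hS A (hΓ hA)⟩
  · intro hfin
    obtain ⟨X, hX⟩ := JComp.compact (CS := CS)
      (fun b v => ∃ A ∈ Γ, b = .b (.f A) ∧ v = True) (by
        intro F
        have hf : {A : Form Ag | A ∈ Γ ∧ JComp.Itm.b (.f A) ∈ F}.Finite := by
          refine Set.Finite.of_finite_image (f := fun A => JComp.Itm.b (.f A))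
            (F.finite_toSet.subset ?_) ?_
          · rintro _ ⟨A, hA, rfl⟩
            exact hA.2
          · intro A _ B _ e
            simpa using e
        obtain ⟨M, m, h, hJ, hN, hH, hS⟩ := hfin hf.toFinset (by
          intro A hA
          have : A ∈ hf.toFinset := hA
          exact ((hf.mem_toFinset).1 this).1)
        refine ⟨⟨M, m, h, hJ, hN, hH⟩, ?_⟩
        rintro b hb v ⟨A, hA, rfl, rfl⟩
        exact iff_true_intro (hS A ((hf.mem_toFinset).2 ⟨hA, hb⟩)))
    obtain ⟨m, h, hh, hk, hl, hp⟩ := JComp.root_real (d := X) X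
    refine ⟨JComp.can X, m, h, JComp.can_jstit X, JComp.can_normal X, hh, fun A hA => ?_⟩
    rw [JComp.truth A m h hk.ge hh, hp]
    exact (hX _ True ⟨A, hA, rfl, rfl⟩).2 trivial
end

section
/- The set of formulas of Form^Ag valid over the class of all (unirelational) jstit models for Ag is a proper subset of the set of formulas valid over the class of (unirelational) jstit models for Ag based on discrete time. In particular, for proof variables x, y, propositional variables p, q, and an agent j ∈ Ag, the formula A := K(¬Proven(x,p) ∨ Proven(y,q)) → (¬Prove(j,x,p) ∨ (y:q → (Proven(y,q) ∨ Prove(j,y,q)))) is valid over every jstit model based on discrete time but is falsified at some moment-history pair of some unirelational jstit model. -/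
open Classical

namespace PreModel

variable {Ag : Type}

theorem sat_neg_or (M : PreModel Ag) (A B : Form Ag) (m : M.W) (h : Set M.W) :
    M.Sat ((A.neg).or B) m h ↔ (M.Sat A m h → M.Sat B m h) := by
  simp only [Form.or, Sat, not_and, not_not]

/-- Histories are downward closed. -/
theorem hist_down (M : PreModel Ag) (hM : M.IsJStit) {g : Set M.W} (hg : IsMaxChain M.le g)
    {a b : M.W} (hb : b ∈ g) (hab : M.le a b) : a ∈ g := by
  have hc : IsChain M.le (insert a g) := by
    refine hg.1.insert ?_
    intro c hcg _
    by_cases hbc : c = b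
    · subst hbc; exact Or.inl hab
    · rcases hg.1 hcg hb hbc with h | h
      · exact (hM.noBackBranch b a c hab h)
      · exact Or.inl (hM.le_trans _ _ _ hab h)
  have := hg.2 hc (Set.subset_insert a g)
  rw [this]; exact Set.mem_insert a g

/-- If `m` is the last moment of `g` then `g` is the only history through `m`. -/
theorem hist_last (M : PreModel Ag) (hM : M.IsJStit) {g k : Set M.W} {m : M.W}
    (hg : M.HistAt m g) (hk : M.HistAt m k) (hlast : ∀ m' ∈ g, M.le m' m) : k = g := by
  refine hk.1.2 hg.1.1 ?_
  intro a ha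
  by_cases ham : a = m
  · subst ham; exact hg.2
  rcases hk.1.1 ha hk.2 ham with h | h
  · exact M.hist_down hM hg.1 hg.2 h
  · have hc : IsChain M.le (insert a g) := by
      refine hg.1.1.insert ?_
      intro c hcg _
      exact Or.inr (hM.le_trans _ _ _ (hlast c hcg) h)
    have := hg.1.2 hc (Set.subset_insert a g)
    rw [this]; exact Set.mem_insert a g

/-- The key fact: in discrete time the formula is valid. -/
theorem discrete_valid (M : PreModel Ag) (hM : M.IsJStit) (hD : M.DiscreteTime)
    (x y : Pol) (p q : Form Ag) (j : Ag) (m : M.W) (h : Set M.W) (hm : M.HistAt m h) :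
    M.Sat ((Form.know (((Form.proven x p).neg).or (Form.proven y q))).imp
          (((Form.prove j x p).neg).or
            ((Form.pf y q).imp ((Form.proven y q).or (Form.prove j y q))))) m h := by
  rw [sat_imp, sat_neg_or, sat_imp, sat_or]
  intro hK hx hy
  by_cases hny : y ∈ M.ActM m
  · exact Or.inl ⟨hny, hy⟩
  refine Or.inr ⟨?_, hy, hny⟩
  obtain ⟨hxC, hxp, hxM⟩ := hx
  intro g hgC
  have hg : M.HistAt m g := hM.choice_hist m j h hm g hgC
  have hxg : x ∈ M.Act m g := hxC g hgC
  obtain ⟨f, hf1, hf2⟩ := hD g hg.1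
  have hex : ∃ m1 ∈ g, ¬ M.le m1 m := by
    by_contra hcon
    push Not at hcon
    apply hxM
    intro k hk
    rw [M.hist_last hM hg hk hcon]; exact hxg
  obtain ⟨m1, hm1, hm1m⟩ := hex
  rw [hf1 m1 hm1 m hg.2] at hm1m
  obtain ⟨m', hm'g, hfm'⟩ := hf2 m1 hm1 (f m + 1) (by omega)
  have hle : M.le m m' := (hf1 m hg.2 m' hm'g).2 (by omega)
  have hne : m ≠ m' := by rintro rfl; omega
  have hlt : M.lt m m' := ⟨hle, hne⟩
  have hR : M.R m m' := hM.futureMatters _ _ hle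
  have hRe : M.Re m m' := hM.r_sub_re _ _ hR
  have key : ∀ k, M.HistAt m' k → M.HistAt m k ∧ M.Act m k = M.Act m g := by
    intro k hk
    have hmk : M.HistAt m k := ⟨hk.1, M.hist_down hM hk.1 hk.2 hle⟩
    exact ⟨hmk, hM.divide m k g hmk hg ⟨m', hlt, hk.2, hm'g⟩⟩
  have hxm' : x ∈ M.ActM m' := by
    intro k hk
    apply hM.expand m m' k hlt hk
    rw [(key k hk).2]; exact hxg
  have hP := (M.sat_neg_or _ _ _ _).1 (hK m' g hR ⟨hg.1, hm'g⟩) ⟨hxm', hM.monoEv x _ _ hRe hxp.1,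
    fun m2 h2 hr => hxp.2 m2 h2 (hM.re_trans _ _ _ hRe hr)⟩
  obtain ⟨m2, k, hm2, hk, hyk⟩ := hM.noNew m' y hP.1
  rw [← (key k hk).2]
  have hm2g : m2 ∈ g := M.hist_down hM hg.1 hm'g hm2.1
  have hm2m : M.le m2 m := by
    rw [hf1 m2 hm2g m hg.2]
    by_contra hcon
    exact hm2.2 (hM.le_antisymm _ _ hm2.1 ((hf1 m' hm'g m2 hm2g).2 (by omega)))
  by_cases he : m2 = m
  · subst he; exact hyk
  · exact hM.expand m2 m k ⟨hm2m, he⟩ (key k hk).1 hyk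

end PreModel

namespace Counter

/-- The history on which the proofs are presented. -/
def Pos : Set ℚ := Set.Ici 0

/-- The history on which no proof is presented. -/
def Neg : Set ℚ := Set.Iic 0

/-- Two copies of the half-line glued at the root `0`. -/
def le (a b : ℚ) : Prop := (0 ≤ a ∧ a ≤ b) ∨ (b ≤ a ∧ a ≤ 0)

theorem chain_pos : IsChain le Pos := by
  intro a ha b hb _
  simp only [Pos, Set.mem_Ici] at ha hb
  rcases le_total a b with h | h
  · exact Or.inl (Or.inl ⟨ha, h⟩)
  · exact Or.inr (Or.inl ⟨hb, h⟩)

theorem chain_neg : IsChain le Neg := by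
  intro a ha b hb _
  simp only [Neg, Set.mem_Iic] at ha hb
  rcases le_total a b with h | h
  · exact Or.inr (Or.inr ⟨h, hb⟩)
  · exact Or.inl (Or.inr ⟨h, ha⟩)

theorem chain_sub_pos {h : Set ℚ} (hc : IsChain le h) {a : ℚ} (ha : a ∈ h) (h0 : 0 < a) :
    h ⊆ Pos := by
  intro b hb
  simp only [Pos, Set.mem_Ici]
  by_contra hcon
  push Not at hcon
  have hne : a ≠ b := by rintro rfl; linarith
  rcases hc ha hb hne with (⟨_, _⟩ | ⟨_, _⟩) | (⟨_, _⟩ | ⟨_, _⟩) <;> linarith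

theorem chain_sub_neg {h : Set ℚ} (hc : IsChain le h) {a : ℚ} (ha : a ∈ h) (h0 : a < 0) :
    h ⊆ Neg := by
  intro b hb
  simp only [Neg, Set.mem_Iic]
  by_contra hcon
  push Not at hcon
  have := chain_sub_pos hc hb hcon ha
  simp only [Pos, Set.mem_Ici] at this
  linarith

theorem max_pos : IsMaxChain le Pos := by
  refine ⟨chain_pos, fun t ht hs => Set.Subset.antisymm hs ?_⟩
  exact chain_sub_pos ht (hs (show (1 : ℚ) ∈ Pos by simp [Pos])) one_pos

theorem max_neg : IsMaxChain le Neg := by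
  refine ⟨chain_neg, fun t ht hs => Set.Subset.antisymm hs ?_⟩
  exact chain_sub_neg ht (hs (show (-1 : ℚ) ∈ Neg by simp [Neg])) (by norm_num)

theorem eq_pos {h : Set ℚ} (hc : IsMaxChain le h) {a : ℚ} (ha : a ∈ h) (h0 : 0 < a) :
    h = Pos := hc.2 chain_pos (chain_sub_pos hc.1 ha h0)

theorem eq_neg {h : Set ℚ} (hc : IsMaxChain le h) {a : ℚ} (ha : a ∈ h) (h0 : a < 0) :
    h = Neg := hc.2 chain_neg (chain_sub_neg hc.1 ha h0)

/-- The dense-time countermodel. -/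
def model {Ag : Type} (x y : Pol) (j0 : Ag) : PreModel Ag where
  W := ℚ
  le := le
  Choice := fun m j h => {g | (IsMaxChain le g ∧ m ∈ g) ∧
    (j = j0 → m = 0 → ((1 : ℚ) ∈ g ↔ (1 : ℚ) ∈ h))}
  Act := fun m h => {t | (0 ≤ m ∧ (1 : ℚ) ∈ h ∧ t = x) ∨ (0 < m ∧ t = y)}
  R := le
  Re := le
  E := fun _ _ => Set.univ
  V := fun _ _ _ => True

variable {Ag : Type} (x y : Pol) (j0 : Ag)

theorem undiv_eq {m : ℚ} {h g : Set ℚ} (hh : IsMaxChain le h) (hg : IsMaxChain le g)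
    (hu : ∃ m', (le m m' ∧ m ≠ m') ∧ m' ∈ h ∧ m' ∈ g) : h = g := by
  obtain ⟨m', ⟨hle, hne⟩, h1, h2⟩ := hu
  rcases lt_trichotomy m' 0 with h0 | h0 | h0
  · rw [eq_neg hh h1 h0, eq_neg hg h2 h0]
  · exfalso
    apply hne
    rcases hle with ⟨_, _⟩ | ⟨_, _⟩ <;> linarith
  · rw [eq_pos hh h1 h0, eq_pos hg h2 h0]

theorem act_nonpos {m : ℚ} (hm : m ≤ 0) (t : Pol) : t ∉ (model x y j0).ActM m := by
  intro ht
  rcases ht Neg ⟨max_neg, hm⟩ with ⟨_, h, _⟩ | ⟨h, _⟩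
  · exact absurd (show (1 : ℚ) ≤ 0 from h) (by norm_num)
  · exact absurd (show (0 : ℚ) < m from h) (not_lt.2 hm)

theorem le_trans' (a b c : ℚ) (h1 : le a b) (h2 : le b c) : le a c := by
  rcases h1 with ⟨_, _⟩ | ⟨_, _⟩ <;> rcases h2 with ⟨_, _⟩ | ⟨_, _⟩
  · left; constructor <;> linarith
  · rcases le_total 0 c with h | h
    · left; constructor <;> linarith
    · right; constructor <;> linarith
  · rcases le_total 0 c with h | h
    · left; constructor <;> linarith
    · right; constructor <;> linarith
  · right; constructor <;> linarith

theorem le_refl' (a : ℚ) : le a a := by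
  rcases le_total 0 a with h | h
  · exact Or.inl ⟨h, le_rfl⟩
  · exact Or.inr ⟨le_rfl, h⟩

theorem isJStit : (model x y j0).IsJStit where
  nonempty := ⟨(0 : ℚ)⟩
  le_refl := le_refl'
  le_trans := le_trans'
  le_antisymm := by
    intro (a : ℚ) (b : ℚ) h1 h2
    change a = b
    rcases h1 with ⟨_, _⟩ | ⟨_, _⟩ <;> rcases h2 with ⟨_, _⟩ | ⟨_, _⟩ <;> linarith
  histConn := by
    intro (a : ℚ) (b : ℚ)
    have : ∀ c : ℚ, le 0 c := fun c => by
      rcases le_total 0 c with h | h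
      · exact Or.inl ⟨le_rfl, h⟩
      · exact Or.inr ⟨h, le_rfl⟩
    exact ⟨(0 : ℚ), this a, this b⟩
  noBackBranch := by
    intro (m : ℚ) (a : ℚ) (b : ℚ) h1 h2
    change le a b ∨ le b a
    change le a m at h1
    change le b m at h2
    unfold le at *
    rcases le_total a b with h | h <;> rcases h1 with ⟨_, _⟩ | ⟨_, _⟩ <;>
      rcases h2 with ⟨_, _⟩ | ⟨_, _⟩ <;> grind
  choice_self := fun m j h hh => ⟨hh, fun _ _ => Iff.rfl⟩
  choice_hist := fun m j h hh g hg => hg.1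
  choice_cells := by
    intro m j h hh g hg
    ext k
    constructor
    · intro hk
      exact ⟨hk.1, fun e1 e2 => (hk.2 e1 e2).trans (hg.2 e1 e2)⟩
    · intro hk
      exact ⟨hk.1, fun e1 e2 => (hk.2 e1 e2).trans (hg.2 e1 e2).symm⟩
  noChoiceUndiv := by
    intro m j h g hh hg hu
    have : h = g := undiv_eq hh.1 hg.1 hu
    rw [this]
  indep := by
    intro m f hf
    refine ⟨f j0, fun j => ⟨hf j0, ?_⟩⟩
    rintro rfl _
    exact Iff.rfl
  r_refl := le_refl'
  r_trans := le_trans'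
  re_refl := le_refl'
  re_trans := le_trans'
  r_sub_re := fun _ _ h => h
  monoEv := fun _ _ _ _ => Set.Subset.rfl
  evApp := fun _ _ _ _ _ _ _ => Set.mem_univ _
  evSum := fun _ _ _ => Set.subset_univ _
  evBang := fun _ _ _ _ => Set.mem_univ _
  expand := by
    intro (m' : ℚ) (m : ℚ) h hlt hh t ht
    have hle : le m' m := hlt.1
    rcases ht with ⟨h1, h2, h3⟩ | ⟨h1, h2⟩
    · left
      refine ⟨?_, h2, h3⟩
      have := eq_pos hh.1 h2 one_pos
      have hm := hh.2
      rw [this] at hm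
      exact hm
    · right
      refine ⟨?_, h2⟩
      have h1 : (0 : ℚ) < m' := h1
      change (0 : ℚ) < m
      rcases hle with ⟨_, _⟩ | ⟨_, _⟩ <;> linarith
  noNew := by
    intro (m : ℚ) t ht
    rcases le_or_gt m 0 with hm | hm
    · exact absurd ht (act_nonpos x y j0 hm t)
    · have hH : (model x y j0).HistAt m Pos := ⟨max_pos, hm.le⟩
      refine ⟨(m / 2 : ℚ), Pos, ⟨Or.inl ⟨by linarith, by linarith⟩, ?_⟩, hH, ?_⟩
      · intro (e : m / 2 = m)
        linarith
      · rcases ht _ hH with ⟨_, h2, h3⟩ | ⟨_, h2⟩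
        · exact Or.inl ⟨(half_pos hm).le, h2, h3⟩
        · exact Or.inr ⟨half_pos hm, h2⟩
  divide := by
    intro m h g hh hg hu
    have : h = g := undiv_eq hh.1 hg.1 hu
    rw [this]
  futureMatters := fun _ _ h => h
  transparency := by
    intro (m : ℚ) (m' : ℚ) hle t ht
    rcases le_or_gt m 0 with hm | hm
    · exact absurd ht (act_nonpos x y j0 hm t)
    · have hle : le m m' := hle
      have hm' : 0 < m' := by rcases hle with ⟨_, _⟩ | ⟨_, _⟩ <;> linarith
      intro h hh
      have hE : h = Pos := eq_pos hh.1 hh.2 hm'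
      subst hE
      rcases ht _ ⟨max_pos, hm.le⟩ with ⟨_, h2, h3⟩ | ⟨_, h2⟩
      · exact Or.inl ⟨hm'.le, h2, h3⟩
      · exact Or.inr ⟨hm', h2⟩

theorem fails (hxy : y ≠ x) (np nq : ℕ) :
    ¬ (model x y j0).Sat
      ((Form.know (((Form.proven x (Form.var np)).neg).or (Form.proven y (Form.var nq)))).imp
          (((Form.prove j0 x (Form.var np)).neg).or
            ((Form.pf y (Form.var nq)).imp
              ((Form.proven y (Form.var nq)).or (Form.prove j0 y (Form.var nq))))))
      (0 : ℚ) Pos := by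
  intro H0
  have H := fun a b c => (PreModel.sat_or _ _ _ _ _).1 ((PreModel.sat_imp _ _ _ _ _).1
    ((PreModel.sat_neg_or _ _ _ _ _).1 ((PreModel.sat_imp _ _ _ _ _).1 H0 a) b) c)
  have h0 : (model x y j0).HistAt (0 : ℚ) Pos :=
    ⟨max_pos, show (0 : ℚ) ∈ Pos from le_refl (0 : ℚ)⟩
  have hy := H ?_ ?_ ?_
  · rcases hy with hy | hy
    · exact act_nonpos x y j0 (le_refl (0 : ℚ)) y hy.1
    have h1 := hy.1 _ ((isJStit x y j0).choice_self _ j0 _ h0)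
    rcases h1 with ⟨_, _, h⟩ | ⟨h, _⟩
    · exact hxy h
    · exact absurd (show (0 : ℚ) < 0 from h) (lt_irrefl _)
  · intro (m : ℚ) h hR hh
    refine (PreModel.sat_neg_or _ _ _ _ _).2 fun hx => ?_
    refine ⟨?_, Set.mem_univ _, fun _ _ _ _ => trivial⟩
    rcases le_or_gt m 0 with hm | hm
    · exact absurd hx.1 (act_nonpos x y j0 hm x)
    · intro k hk
      exact Or.inr ⟨hm, rfl⟩
  · refine ⟨?_, ⟨Set.mem_univ _, fun _ _ _ _ => trivial⟩,
      act_nonpos x y j0 (le_refl (0 : ℚ)) x⟩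
    intro g hg
    refine Or.inl ⟨le_refl (0 : ℚ), (hg.2 rfl rfl).2 ?_, rfl⟩
    show (1 : ℚ) ∈ Pos
    simp [Pos]
  · exact ⟨Set.mem_univ _, fun _ _ _ _ => trivial⟩

theorem fails_ex (nx ny np nq : ℕ) (hxy : nx ≠ ny) (j : Ag) :
    ∃ M : PreModel Ag, M.IsJStit ∧ M.Unirelational ∧ ∃ m h, M.HistAt m h ∧
    ¬ M.Sat
      ((Form.know (((Form.proven (Pol.pvar nx) (Form.var np)).neg).or
          (Form.proven (Pol.pvar ny) (Form.var nq)))).imp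
          (((Form.prove j (Pol.pvar nx) (Form.var np)).neg).or
            ((Form.pf (Pol.pvar ny) (Form.var nq)).imp
              ((Form.proven (Pol.pvar ny) (Form.var nq)).or
                (Form.prove j (Pol.pvar ny) (Form.var nq)))))) m h := by
  refine ⟨model (Pol.pvar nx) (Pol.pvar ny) j, isJStit _ _ _, fun _ _ h => h, (0 : ℚ),
    Pos, ⟨max_pos, show (0 : ℚ) ∈ Pos from le_refl (0 : ℚ)⟩, ?_⟩
  exact fails _ _ _ (fun e => hxy (Pol.pvar.inj e).symm) np nq

end Counter

/-- The validities over all (unirelational) jstit models form a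
proper subset of the validities over (unirelational) jstit models based on
discrete time; witnessed by the formula
K(¬Proven(x,p) ∨ Proven(y,q)) → (¬Prove(j,x,p) ∨ (y:q → (Proven(y,q) ∨ Prove(j,y,q)))). -/
theorem discrete_time_proper {Ag : Type} [Fintype Ag] [Nonempty Ag] :
    ({A : Form Ag | ∀ M : PreModel Ag, M.IsJStit →
        ∀ m h, M.HistAt m h → M.Sat A m h} ⊂
      {A : Form Ag | ∀ M : PreModel Ag, M.IsJStit → M.DiscreteTime →
        ∀ m h, M.HistAt m h → M.Sat A m h}) ∧
    ({A : Form Ag | ∀ M : PreModel Ag, M.IsJStit → M.Unirelational →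
        ∀ m h, M.HistAt m h → M.Sat A m h} ⊂
      {A : Form Ag | ∀ M : PreModel Ag, M.IsJStit → M.Unirelational → M.DiscreteTime →
        ∀ m h, M.HistAt m h → M.Sat A m h}) ∧
    (∀ (nx ny np nq : ℕ), nx ≠ ny → np ≠ nq → ∀ j : Ag,
      let x : Pol := Pol.pvar nx
      let y : Pol := Pol.pvar ny
      let p : Form Ag := Form.var np
      let q : Form Ag := Form.var nq
      let A : Form Ag :=
        (Form.know (((Form.proven x p).neg).or (Form.proven y q))).imp
          (((Form.prove j x p).neg).or
            ((Form.pf y q).imp ((Form.proven y q).or (Form.prove j y q))))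
      (∀ M : PreModel Ag, M.IsJStit → M.DiscreteTime →
          ∀ m h, M.HistAt m h → M.Sat A m h) ∧
      (∃ M : PreModel Ag, M.IsJStit ∧ M.Unirelational ∧
          ∃ m h, M.HistAt m h ∧ ¬ M.Sat A m h)) := by
  obtain ⟨j⟩ := ‹Nonempty Ag›
  obtain ⟨M, hM, hU, m, h, hmh, hn⟩ := Counter.fails_ex 0 1 0 1 (by decide) j
  refine ⟨⟨fun A hA M hM _ => hA M hM, fun hs => ?_⟩,
    ⟨fun A hA M hM hU _ => hA M hM hU, fun hs => ?_⟩, ?_⟩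
  · exact hn (hs (fun M hM hD m h hmh => M.discrete_valid hM hD _ _ _ _ j m h hmh) M hM m h hmh)
  · exact hn (hs (fun M hM _ hD m h hmh => M.discrete_valid hM hD _ _ _ _ j m h hmh)
      M hM hU m h hmh)
  · intro nx ny np nq hxy _ j
    exact ⟨fun M hM hD m h hmh => M.discrete_valid hM hD _ _ _ _ j m h hmh,
      Counter.fails_ex nx ny np nq hxy j⟩
end

section
/- Alternative axiomatization: let CS be a constant specification and let Π'(CS) be obtained from Π(CS) by replacing the rule (S4) with the axiom scheme (A_S4): K(¬Proven(t1,B1) ∨ … ∨ ¬Proven(tn,Bn)) → (⋀_{j∈Ag}¬Prove(j,t1,B1) ∨ … ∨ ⋀_{j∈Ag}¬Prove(j,tn,Bn)) for arbitrary t1,…,tn ∈ Pol and B1,…,Bn ∈ Form^Ag. Then for every A ∈ Form^Ag, A is provable in Π(CS) if and only if A is provable in Π'(CS). -/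
open Classical

theorem Prov.impTrans {Ag : Type} [Fintype Ag] {CS : Set (Form Ag)} {A B C : Form Ag}
    (h₁ : Prov CS (A.imp B)) (h₂ : Prov CS (B.imp C)) : Prov CS (A.imp C) :=
  .mp (.mp (.ax (.pl2 A B C)) (.mp (.ax (.pl1 _ A)) h₂)) h₁

theorem Prov'.impTrans {Ag : Type} [Fintype Ag] {CS : Set (Form Ag)} {A B C : Form Ag}
    (h₁ : Prov' CS (A.imp B)) (h₂ : Prov' CS (B.imp C)) : Prov' CS (A.imp C) :=
  .mp (.mp (.ax (.pl2 A B C)) (.mp (.ax (.pl1 _ A)) h₂)) h₁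

/-- Lemma 4: The systems Π(CS) and Π'(CS) (with rule (S4)
replaced by the axiom scheme (A_S4)) prove the same formulas. -/
theorem alternative_axiomatization {Ag : Type} [Fintype Ag] [Nonempty Ag]
    (CS : Set (Form Ag)) (hCS : IsConstSpec CS) (A : Form Ag) :
    Prov CS A ↔ Prov' CS A := by
  constructor
  · intro h
    induction h with
    | ax h => exact .ax h
    | mp _ _ h₁ h₂ => exact .mp h₁ h₂
    | knec _ h => exact .knec h
    | s4 hne _ h =>
      exact ((Prov'.ax (.k4 _)).impTrans (.mp (.ax (.kK _ _)) (.knec h))).impTrans (.as4 _ hne)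
    | rcs h => exact .rcs h
  · intro h
    induction h with
    | ax h => exact .ax h
    | as4 l hne => exact .s4 hne (.ax (.kT _))
    | mp _ _ h₁ h₂ => exact .mp h₁ h₂
    | knec _ h => exact .knec h
    | rcs h => exact .rcs h
end
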